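/- arXiv:1312.2153 — 7 statements merged into one kernel-verified Lean document; each statement's English description precedes it below -/
import Mathlib

section
/- For all x < 0 and y < 0, lim_{n→∞} [P(X ≤ 1 + u_n·x, ρ_n|X| + √(1-ρ_n²)·Y ≤ 1 + u_n·y)]^n = exp(-I_α·(|x|^{1/2+α}·Υ_α((λ + (y-x)/(2λ))/√(2|x|)) + |y|^{1/2+α}·(1 + Υ_α((λ + (x-y)/(2λ))/√(2|y|))))). -/
open MeasureTheory Filter Real Set ProbabilityTheory Topology

noncomputable def Ialpha (α : ℝ) : ℝ :=
  (Real.sqrt (2 * Real.pi))⁻¹ * (Real.Gamma (α + 1) / Real.Gamma (α + 3 / 2))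

noncomputable def Upsilon (α t : ℝ) : ℝ :=
  (∫ s in Set.Icc (-1 : ℝ) (min t 1), (1 - s ^ 2) ^ α) /
    (∫ s in Set.Icc (-1 : ℝ) 1, (1 - s ^ 2) ^ α)

lemma aux_T_lim {α : ℝ} {T : ℕ → ℝ → ℝ} (hα : 0 < α)
    (hmono : ∀ n, Monotone (T n))
    (hT : ∀ c, Tendsto (fun n => T n c) atTop (𝓝 ((max c 0) ^ α)))
    {w : ℕ → ℝ} {w0 : ℝ} (hw : Tendsto w atTop (𝓝 w0)) :
    Tendsto (fun n => T n (w n)) atTop (𝓝 ((max w0 0) ^ α)) := by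
  have hQ : Continuous (fun c : ℝ => (max c 0) ^ α) :=
    (continuous_id.max continuous_const).rpow_const (fun _ => Or.inr hα.le)
  rw [tendsto_order]
  constructor
  · intro a ha
    have h1 : ∀ᶠ c in 𝓝[<] w0, a < (max c 0) ^ α :=
      nhdsWithin_le_nhds ((hQ.tendsto w0).eventually (lt_mem_nhds ha))
    obtain ⟨c, hc, hcw⟩ := (h1.and self_mem_nhdsWithin).exists
    filter_upwards [(hT c).eventually (lt_mem_nhds hc), hw.eventually (lt_mem_nhds hcw)] with n h2 h3
    exact h2.trans_le (hmono n h3.le)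
  · intro a ha
    have h1 : ∀ᶠ c in 𝓝[>] w0, (max c 0) ^ α < a :=
      nhdsWithin_le_nhds ((hQ.tendsto w0).eventually (gt_mem_nhds ha))
    obtain ⟨c, hc, hcw⟩ := (h1.and self_mem_nhdsWithin).exists
    filter_upwards [(hT c).eventually (gt_mem_nhds hc), hw.eventually (gt_mem_nhds hcw)] with n h2 h3
    exact (hmono n h3.le).trans_lt h2

lemma aux_one_sub_cos (t : ℝ) : 1 - Real.cos t = t ^ 2 / 2 * Real.sinc (t / 2) ^ 2 := by
  have h1 : Real.cos t = 1 - 2 * Real.sin (t / 2) ^ 2 := by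
    have := Real.cos_two_mul (t / 2)
    rw [show 2 * (t / 2) = t by ring] at this
    have h2 := Real.sin_sq_add_cos_sq (t / 2)
    linarith
  by_cases ht : t = 0
  · simp [ht]
  · rw [Real.sinc_of_ne_zero (by simpa using ht), h1]
    field_simp
    ring

lemma aux_sinc_lim {t : ℕ → ℝ} (ht : Tendsto t atTop (𝓝 0)) :
    Tendsto (fun n => Real.sinc (t n / 2) ^ 2) atTop (𝓝 1) := by
  have h1 : Tendsto (fun n => t n / 2) atTop (𝓝 0) := by simpa using ht.div_const 2
  have := ((Real.continuous_sinc.tendsto 0).comp h1).pow 2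
  simpa using this

lemma aux_cos_lim {u t : ℕ → ℝ} (hupos : ∀ n, 0 < u n) (hu0 : Tendsto u atTop (𝓝 0)) {s : ℝ}
    (ht : Tendsto (fun n => t n / √(u n)) atTop (𝓝 s)) :
    Tendsto (fun n => (1 - Real.cos (t n)) / u n) atTop (𝓝 (s ^ 2 / 2)) := by
  have hs : ∀ n, 0 < √(u n) := fun n => Real.sqrt_pos.2 (hupos n)
  have ht0 : Tendsto t atTop (𝓝 0) := by
    have h1 : Tendsto (fun n => √(u n)) atTop (𝓝 0) := by
      simpa [Function.comp_def] using (Real.continuous_sqrt.tendsto 0).comp hu0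
    have := ht.mul h1
    rw [mul_zero] at this
    refine this.congr (fun n => ?_)
    have := (hs n).ne'
    field_simp
  have := ((ht.pow 2).div_const 2).mul (aux_sinc_lim ht0)
  rw [mul_one] at this
  refine this.congr (fun n => ?_)
  rw [aux_one_sub_cos, div_pow, Real.sq_sqrt (hupos n).le]
  ring

lemma aux_phi_lim {u ρ : ℕ → ℝ} (hupos : ∀ n, 0 < u n) (hu0 : Tendsto u atTop (𝓝 0))
    (hρ : ∀ n, ρ n ∈ Ioc (0 : ℝ) 1) {lam : ℝ} (hlam : 0 < lam)
    (hHR : Tendsto (fun n : ℕ => (1 - ρ n) / u n) atTop (𝓝 (2 * lam ^ 2))) :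
    Tendsto (fun n => Real.arccos (ρ n) / √(u n)) atTop (𝓝 (2 * lam)) := by
  have hρ1 : Tendsto ρ atTop (𝓝 1) := by
    have := hHR.mul hu0
    have h2 : Tendsto (fun n => 1 - (1 - ρ n) / u n * u n) atTop (𝓝 (1 - 2 * lam ^ 2 * 0)) :=
      tendsto_const_nhds.sub this
    rw [mul_zero, sub_zero] at h2
    refine h2.congr (fun n => ?_)
    have := (hupos n).ne'
    field_simp
    ring
  have hφ0 : Tendsto (fun n => Real.arccos (ρ n)) atTop (𝓝 0) := by
    simpa [Function.comp_def] using (Real.continuous_arccos.tendsto 1).comp hρ1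
  have hsi := aux_sinc_lim hφ0
  have h3 := (hHR.mul_const 2).div hsi one_ne_zero
  have h4 := (Real.continuous_sqrt.tendsto _).comp h3
  have e : √(2 * lam ^ 2 * 2 / 1) = 2 * lam := by
    rw [show 2 * lam ^ 2 * 2 / 1 = (2 * lam) ^ 2 by ring, Real.sqrt_sq (by positivity)]
  rw [e] at h4
  refine h4.congr' ?_
  filter_upwards [hsi.eventually (lt_mem_nhds one_pos)] with n hn
  have hc : Real.cos (Real.arccos (ρ n)) = ρ n :=
    Real.cos_arccos (by linarith [(hρ n).1]) (hρ n).2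
  have h5 := aux_one_sub_cos (Real.arccos (ρ n))
  rw [hc] at h5
  simp only [Function.comp, Pi.div_apply]
  rw [h5, ← Real.sqrt_sq (Real.arccos_nonneg (ρ n)), ← Real.sqrt_div (sq_nonneg _),
    Real.sqrt_sq (Real.arccos_nonneg (ρ n))]
  congr 1
  have := (hupos n).ne'
  have h6 : Real.sinc (Real.arccos (ρ n) / 2) ≠ 0 := fun h => by simp [h] at hn
  field_simp

lemma aux_dct {α : ℝ} (hα : 0 < α) {G p : ℝ → ℝ} (hG : Antitone G)
    (hG1 : ∀ r, 1 ≤ r → G r = 0)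
    (hpG : ∀ h, 0 < h → p h = G (1 / h)) (hp0 : ∀ h, h ≤ 1 → p h = 0) (hpm : Measurable p)
    {u : ℕ → ℝ} (hupos : ∀ n, 0 < u n) (hu0 : Tendsto u atTop (𝓝 0))
    (hT : ∀ c, Tendsto (fun n : ℕ => (n : ℝ) * √(u n) * G (1 - u n * c)) atTop
      (𝓝 ((max c 0) ^ α)))
    {h : ℕ → ℝ → ℝ} (hhm : ∀ n, Measurable (h n)) {W : ℝ → ℝ}
    (hW : ∀ s, Tendsto (fun n => (h n (√(u n) * s) - 1) / u n) atTop (𝓝 (W s)))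
    {M C : ℝ}
    (hdom : ∀ᶠ n in atTop, ∀ θ, |θ| ≤ π / 2 → 1 < h n θ → |θ| ≤ M * √(u n) ∧
      h n θ ≤ 1 + C * u n) :
    Tendsto (fun n : ℕ => (n : ℝ) * ∫ θ in (-(π / 2))..(π / 2), p (h n θ)) atTop
      (𝓝 (∫ s, (max (W s) 0) ^ α)) := by
  have hs : ∀ n, 0 < √(u n) := fun n => Real.sqrt_pos.2 (hupos n)
  have hs0 : Tendsto (fun n => √(u n)) atTop (𝓝 0) := by
    simpa [Function.comp_def] using (Real.continuous_sqrt.tendsto 0).comp hu0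
  have hGnn : ∀ r, 0 ≤ G r := fun r => by
    rw [← hG1 (max r 1) (le_max_right _ _)]; exact hG (le_max_left _ _)
  have hpnn : ∀ r, 0 ≤ p r := fun r => by
    rcases le_or_gt r 1 with h | h
    · rw [hp0 r h]
    · rw [hpG r (by linarith)]; exact hGnn _
  set K : ℕ → ℝ → ℝ := fun n s =>
    (Icc (-(π / 2)) (π / 2)).indicator (fun θ => (n : ℝ) * √(u n) * p (h n θ)) (√(u n) * s) with hK
  have e : ∀ n : ℕ, (n : ℝ) * ∫ θ in (-(π / 2))..(π / 2), p (h n θ) = ∫ s, K n s := by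
    intro n
    rw [hK]
    simp only
    rw [Measure.integral_comp_mul_left, integral_indicator measurableSet_Icc,
      integral_Icc_eq_integral_Ioc, ← intervalIntegral.integral_of_le (by linarith [Real.pi_pos]),
      intervalIntegral.integral_const_mul, abs_of_pos (inv_pos.2 (hs n)), smul_eq_mul]
    have := (hs n).ne'
    field_simp
  simp_rw [e]
  refine tendsto_integral_filter_of_dominated_convergence
    ((Icc (-M) M).indicator (fun _ => (max C 0) ^ α + 1)) ?_ ?_ ?_ ?_
  · refine Eventually.of_forall fun n => Measurable.aestronglyMeasurable ?_
    have h1 : Measurable (fun θ => (n : ℝ) * √(u n) * p (h n θ)) :=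
      (hpm.comp (hhm n)).const_mul _
    exact (h1.indicator measurableSet_Icc).comp (measurable_const_mul _)
  · filter_upwards [hdom, (hT C).eventually (gt_mem_nhds (lt_add_one _))] with n hd hn
    refine Eventually.of_forall fun s => ?_
    have hnn : 0 ≤ (max C 0) ^ α + 1 := by positivity
    have hrhs : 0 ≤ (Icc (-M) M).indicator (fun _ => (max C 0) ^ α + 1) s :=
      indicator_nonneg (fun _ _ => hnn) s
    by_cases hmem : √(u n) * s ∈ Icc (-(π / 2)) (π / 2)
    · simp only [hK]
      rw [indicator_of_mem hmem]
      by_cases hh : 1 < h n (√(u n) * s)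
      · obtain ⟨h1, h2⟩ := hd _ (abs_le.2 hmem) hh
        rw [abs_mul, abs_of_pos (hs n), mul_comm] at h1
        have h3 := abs_le.1 (le_of_mul_le_mul_right h1 (hs n))
        rw [indicator_of_mem (show s ∈ Icc (-M) M from h3)]
        have h0 : 0 ≤ (n : ℝ) * √(u n) * p (h n (√(u n) * s)) :=
          mul_nonneg (mul_nonneg (Nat.cast_nonneg n) (hs n).le) (hpnn _)
        rw [Real.norm_of_nonneg h0]
        refine le_trans ?_ hn.le
        refine mul_le_mul_of_nonneg_left ?_ (mul_nonneg (Nat.cast_nonneg n) (hs n).le)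
        rw [hpG _ (by linarith)]
        apply hG
        have hpos : 0 < h n (√(u n) * s) := by linarith
        rw [le_div_iff₀ hpos]
        nlinarith [sq_nonneg (h n (√(u n) * s) - 1)]
      · rw [hp0 _ (not_lt.1 hh)]
        simpa using hrhs
    · simp only [hK]
      rw [indicator_of_notMem hmem]
      simpa using hrhs
  · exact (integrable_indicator_iff measurableSet_Icc).2 (integrableOn_const (by simp) (by simp))
  · refine Eventually.of_forall fun s => ?_
    have hws := hW s
    have h1 : Tendsto (fun n => h n (√(u n) * s)) atTop (𝓝 1) := by
      have := (hws.mul hu0).const_add 1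
      rw [mul_zero, add_zero] at this
      refine this.congr fun n => ?_
      have := (hupos n).ne'
      field_simp
      ring
    have h2 : Tendsto (fun n => (h n (√(u n) * s) - 1) / u n / h n (√(u n) * s)) atTop
        (𝓝 (W s)) := by
      have := hws.div h1 one_ne_zero
      rw [div_one] at this
      exact this
    have h3 := aux_T_lim (T := fun n c => (n : ℝ) * √(u n) * G (1 - u n * c)) hα
      (fun n a b hab => mul_le_mul_of_nonneg_left (hG (by nlinarith [hupos n]))
        (mul_nonneg (Nat.cast_nonneg n) (hs n).le)) hT h2
    refine h3.congr' ?_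
    have h4 : Tendsto (fun n => √(u n) * s) atTop (𝓝 0) := by simpa using hs0.mul_const s
    filter_upwards [h1.eventually (lt_mem_nhds one_pos),
      h4.eventually (Icc_mem_nhds (show -(π / 2) < 0 by linarith [Real.pi_pos])
        (show 0 < π / 2 by linarith [Real.pi_pos]))] with n hn hmem
    simp only [hK]
    rw [indicator_of_mem (show √(u n) * s ∈ Icc (-(π / 2)) (π / 2) from hmem), hpG _ hn]
    congr 2
    have := (hupos n).ne'
    field_simp
    ring

lemma aux_beta {α : ℝ} (hα : 0 < α) :
    ∫ s in Set.Icc (-1 : ℝ) 1, (1 - s ^ 2) ^ α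
      = √π * (Real.Gamma (α + 1) / Real.Gamma (α + 3 / 2)) := by
  have h1 : ∫ s in (-1 : ℝ)..1, (1 - s ^ 2) ^ α
      = 2 * ∫ t in (0 : ℝ)..1, (1 - (2 * t - 1) ^ 2) ^ α := by
    rw [intervalIntegral.integral_comp_mul_sub (fun s => (1 - s ^ 2) ^ α) two_ne_zero 1]
    norm_num
    ring
  have h2 : ∫ t in (0 : ℝ)..1, (1 - (2 * t - 1) ^ 2) ^ α
      = 4 ^ α * ∫ t in (0 : ℝ)..1, t ^ α * (1 - t) ^ α := by
    rw [← intervalIntegral.integral_const_mul]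
    refine intervalIntegral.integral_congr fun t ht => ?_
    rw [uIcc_of_le zero_le_one] at ht
    rw [← Real.mul_rpow ht.1 (by linarith [ht.2]), ← Real.mul_rpow (by norm_num)
      (mul_nonneg ht.1 (by linarith [ht.2]))]
    congr 1
    ring
  have h3 : ((∫ t in (0 : ℝ)..1, t ^ α * (1 - t) ^ α : ℝ) : ℂ)
      = Complex.betaIntegral ((α + 1 : ℝ) : ℂ) ((α + 1 : ℝ) : ℂ) := by
    rw [Complex.betaIntegral, ← intervalIntegral.integral_ofReal]
    refine intervalIntegral.integral_congr fun t ht => ?_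
    rw [uIcc_of_le zero_le_one] at ht
    push_cast
    rw [Complex.ofReal_cpow ht.1, Complex.ofReal_cpow (by linarith [ht.2])]
    push_cast
    simp
  have h4 := beta_eq_betaIntegralReal (α + 1) (α + 1) (by linarith) (by linarith)
  rw [← h3, Complex.ofReal_re, beta] at h4
  have h5 := Real.Gamma_mul_Gamma_add_half (α + 1)
  rw [integral_Icc_eq_integral_Ioc, ← intervalIntegral.integral_of_le (by norm_num), h1, h2, ← h4]
  have g1 : Real.Gamma (α + 3 / 2) ≠ 0 := (Real.Gamma_pos_of_pos (by linarith)).ne'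
  have g2 : Real.Gamma (α + 1 + (α + 1)) ≠ 0 := (Real.Gamma_pos_of_pos (by linarith)).ne'
  rw [show α + 1 + 1 / 2 = α + 3 / 2 by ring, show 2 * (α + 1) = α + 1 + (α + 1) by ring] at h5
  have h6 : (2 : ℝ) * 4 ^ α * 2 ^ (1 - (α + 1 + (α + 1))) = 1 := by
    rw [show (4 : ℝ) = 2 ^ (2 : ℝ) by norm_num, ← Real.rpow_mul (by norm_num)]
    nth_rewrite 1 [← Real.rpow_one 2]
    rw [← Real.rpow_add (by norm_num), ← Real.rpow_add (by norm_num)]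
    ring_nf
    simp
  generalize Real.Gamma (α + 3 / 2) = g15 at *
  generalize Real.Gamma (α + 1 + (α + 1)) = g22 at *
  generalize Real.Gamma (α + 1) = g at *
  generalize (2 : ℝ) ^ (1 - (α + 1 + (α + 1))) = q at *
  generalize (4 : ℝ) ^ α = f at *
  field_simp
  linear_combination g * (2 * f * h5 + g22 * √π * h6)

lemma aux_upsilon_int {α : ℝ} (hα : 0 < α) (t : ℝ) :
    ∫ r in Iic t, (max (1 - r ^ 2) 0) ^ α
      = Upsilon α t * (√π * (Real.Gamma (α + 1) / Real.Gamma (α + 3 / 2))) := by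
  have hpos : 0 < √π * (Real.Gamma (α + 1) / Real.Gamma (α + 3 / 2)) :=
    mul_pos (Real.sqrt_pos.2 Real.pi_pos)
      (div_pos (Real.Gamma_pos_of_pos (by linarith)) (Real.Gamma_pos_of_pos (by linarith)))
  rw [Upsilon, aux_beta hα, div_mul_cancel₀ _ hpos.ne', ← integral_indicator measurableSet_Iic,
    ← integral_indicator measurableSet_Icc]
  congr 1
  ext r
  by_cases h : r ∈ Icc (-1) (min t 1)
  · have h1 : r ≤ t := h.2.trans (min_le_left _ _)
    have h2 : r ≤ 1 := h.2.trans (min_le_right _ _)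
    rw [indicator_of_mem h, indicator_of_mem (show r ∈ Iic t from h1),
      max_eq_left (by nlinarith [h.1])]
  · rw [indicator_of_notMem h]
    by_cases h1 : r ≤ t
    · rw [indicator_of_mem (show r ∈ Iic t from h1), max_eq_right, Real.zero_rpow hα.ne']
      by_contra! h2
      have h3 := abs_lt.1 ((sq_lt_one_iff_abs_lt_one r).1 (by linarith))
      exact h ⟨h3.1.le, le_min h1 h3.2.le⟩
    · rw [indicator_of_notMem (by simpa using h1)]

lemma aux_const {α m : ℝ} (hm : 0 < m) (r : ℝ) :
    (max (m - (√(2 * m) * r) ^ 2 / 2) 0) ^ α = m ^ α * (max (1 - r ^ 2) 0) ^ α := by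
  rw [← Real.mul_rpow hm.le (le_max_right _ _), mul_max_of_nonneg _ _ hm.le, mul_zero, mul_pow,
    Real.sq_sqrt (by linarith)]
  ring_nf

lemma aux_half {α m : ℝ} (hα : 0 < α) (hm : 0 < m) (t : ℝ) :
    ∫ s in Iic t, (max (m - s ^ 2 / 2) 0) ^ α
      = 2 * π * Ialpha α * (m ^ (1 / 2 + α) * Upsilon α (t / √(2 * m))) := by
  have hs : 0 < √(2 * m) := Real.sqrt_pos.2 (by linarith)
  have h1 : ∫ s in Iic t, (max (m - s ^ 2 / 2) 0) ^ α
      = √(2 * m) * ∫ r, (Iic t).indicator (fun s => (max (m - s ^ 2 / 2) 0) ^ α)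
        (√(2 * m) * r) := by
    rw [Measure.integral_comp_mul_left, integral_indicator measurableSet_Iic,
      abs_of_pos (inv_pos.2 hs), smul_eq_mul, mul_inv_cancel_left₀ hs.ne']
  have h2 : ∀ r, (Iic t).indicator (fun s => (max (m - s ^ 2 / 2) 0) ^ α) (√(2 * m) * r)
      = m ^ α * (Iic (t / √(2 * m))).indicator (fun r => (max (1 - r ^ 2) 0) ^ α) r := by
    intro r
    by_cases h : r ≤ t / √(2 * m)
    · have h' : √(2 * m) * r ≤ t := by rwa [le_div_iff₀ hs, mul_comm] at h
      rw [indicator_of_mem (show _ ∈ Iic _ from h'), indicator_of_mem (show _ ∈ Iic _ from h),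
        aux_const hm]
    · have h' : ¬ √(2 * m) * r ≤ t := by rwa [le_div_iff₀ hs, mul_comm] at h
      rw [indicator_of_notMem (show _ ∉ Iic _ from h'), indicator_of_notMem (show _ ∉ Iic _ from h),
        mul_zero]
  rw [h1]
  simp_rw [h2]
  rw [integral_const_mul, integral_indicator measurableSet_Iic, aux_upsilon_int hα, Ialpha,
    Real.rpow_add hm, ← Real.sqrt_eq_rpow, Real.sqrt_mul (by norm_num), Real.sqrt_mul (by norm_num)]
  have hp := Real.sq_sqrt Real.pi_pos.le
  have h22 := Real.sq_sqrt (show (0 : ℝ) ≤ 2 by norm_num)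
  have hp0 := (Real.sqrt_pos.2 Real.pi_pos).ne'
  have h20 := (Real.sqrt_pos.2 (show (0 : ℝ) < 2 by norm_num)).ne'
  have e : 2 * π * (√2 * √π)⁻¹ = √2 * √π := by
    rw [← div_eq_mul_inv, div_eq_iff (by positivity)]
    linear_combination (-√π ^ 2) * h22 - 2 * hp
  linear_combination (-(Real.Gamma (α + 1) / Real.Gamma (α + 3 / 2)) * (√m * m ^ α *
    Upsilon α (t / (√2 * √m)))) * e

lemma aux_upsilon_one {α : ℝ} (hα : 0 < α) {t : ℝ} (ht : 1 ≤ t) : Upsilon α t = 1 := by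
  have hpos : 0 < √π * (Real.Gamma (α + 1) / Real.Gamma (α + 3 / 2)) :=
    mul_pos (Real.sqrt_pos.2 Real.pi_pos)
      (div_pos (Real.Gamma_pos_of_pos (by linarith)) (Real.Gamma_pos_of_pos (by linarith)))
  rw [Upsilon, min_eq_right ht, aux_beta hα, div_self hpos.ne']

lemma aux_integrable {α m : ℝ} (hα : 0 < α) (hm : 0 < m) :
    Integrable (fun s : ℝ => (max (m - s ^ 2 / 2) 0) ^ α) := by
  refine Continuous.integrable_of_hasCompactSupport ?_ ?_
  · exact ((by fun_prop : Continuous fun s : ℝ => max (m - s ^ 2 / 2) 0)).rpow_const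
      (fun _ => Or.inr hα.le)
  · refine HasCompactSupport.intro (isCompact_Icc (a := -√(2 * m)) (b := √(2 * m))) fun s hs => ?_
    rw [max_eq_right, Real.zero_rpow hα.ne']
    by_contra! h
    exact hs (abs_le.1 (Real.abs_le_sqrt (by linarith)))

lemma aux_full {α m : ℝ} (hα : 0 < α) (hm : 0 < m) (c : ℝ) :
    ∫ s, (max (m - (s - c) ^ 2 / 2) 0) ^ α = 2 * π * Ialpha α * m ^ (1 / 2 + α) := by
  rw [integral_sub_right_eq_self (fun s => (max (m - s ^ 2 / 2) 0) ^ α) c]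
  have hs : 0 < √(2 * m) := Real.sqrt_pos.2 (by linarith)
  have := aux_half hα hm √(2 * m)
  rw [div_self hs.ne', aux_upsilon_one hα le_rfl, mul_one] at this
  rw [← this]
  symm
  apply setIntegral_eq_integral_of_forall_compl_eq_zero
  intro s hs
  rw [max_eq_right, Real.zero_rpow hα.ne']
  by_contra! h
  exact hs (abs_le.1 (Real.abs_le_sqrt (by linarith))).2

lemma aux_max {α lam x y : ℝ} (hα : 0 < α) (hlam : 0 < lam) (hx : x < 0) (hy : y < 0) :
    ∫ s, (max (max (|x| - s ^ 2 / 2) (|y| - (s - 2 * lam) ^ 2 / 2)) 0) ^ α =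
      2 * π * Ialpha α *
        (|x| ^ (1 / 2 + α) * Upsilon α ((lam + (y - x) / (2 * lam)) / Real.sqrt (2 * |x|)) +
           |y| ^ (1 / 2 + α) * Upsilon α ((lam + (x - y) / (2 * lam)) / Real.sqrt (2 * |y|))) := by
  have hx' : 0 < |x| := abs_pos.2 hx.ne
  have hy' : 0 < |y| := abs_pos.2 hy.ne
  set τ := lam + (y - x) / (2 * lam) with hτ
  have hτ' : lam + (x - y) / (2 * lam) = 2 * lam - τ := by rw [hτ]; ring
  have hτ2 : 2 * lam * τ = 2 * lam ^ 2 + (y - x) := by rw [hτ]; field_simp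
  rw [hτ', mul_add, ← aux_half hα hx', ← aux_half hα hy']
  have i1 := (aux_integrable hα hx').indicator (measurableSet_Iic (a := τ))
  have i2 := (aux_integrable hα hy').indicator (measurableSet_Iio (a := 2 * lam - τ))
  rw [integral_Iic_eq_integral_Iio (x := 2 * lam - τ), ← integral_indicator measurableSet_Iic,
    ← integral_indicator measurableSet_Iio,
    ← integral_sub_left_eq_self
      ((Iio (2 * lam - τ)).indicator fun s => (max (|y| - s ^ 2 / 2) 0) ^ α) volume (2 * lam),
    ← integral_add i1 (i2.comp_sub_left (2 * lam))]
  congr 1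
  ext s
  rw [abs_of_neg hx, abs_of_neg hy]
  by_cases h : s ≤ τ
  · have hm : -y - (s - 2 * lam) ^ 2 / 2 ≤ -x - s ^ 2 / 2 := by nlinarith
    rw [indicator_of_mem (show s ∈ Iic τ from h), indicator_of_notMem (by simp; linarith),
      add_zero, max_eq_left hm]
  · have hm : -x - s ^ 2 / 2 ≤ -y - (s - 2 * lam) ^ 2 / 2 := by nlinarith
    rw [indicator_of_notMem (show s ∉ Iic τ from h), indicator_of_mem (by simp; linarith),
      zero_add, max_eq_right hm]
    ring_nf

lemma aux_comp {u z t : ℝ} (hu : 0 < u) (hz : z < 0) (huz : u * |z| ≤ 1 / 2) (ht : |t| ≤ π)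
    (h1 : 1 < Real.cos t / (1 + u * z)) :
    |t| ≤ √(|z| * π ^ 2 / 2) * √u ∧ Real.cos t / (1 + u * z) ≤ 1 + 2 * |z| * u := by
  rw [abs_of_neg hz] at *
  have ha : 0 < 1 + u * z := by linarith
  constructor
  · rw [lt_div_iff₀ ha] at h1
    rw [← Real.sqrt_mul (by nlinarith [sq_nonneg π])]
    apply Real.abs_le_sqrt
    have h2 := Real.cos_le_one_sub_mul_cos_sq ht
    have h3 : 2 / π ^ 2 * t ^ 2 ≤ u * -z := by linarith
    have h4 : t ^ 2 = (2 / π ^ 2 * t ^ 2) * (π ^ 2 / 2) := by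
      have := Real.pi_ne_zero
      field_simp
    rw [h4]
    calc _ ≤ (u * -z) * (π ^ 2 / 2) := by gcongr
      _ = _ := by ring
  · rw [div_le_iff₀ ha]
    have h2 := Real.cos_le_one t
    have h5 : 0 ≤ u * -z := by nlinarith
    nlinarith

lemma aux_W {u t : ℕ → ℝ} (hupos : ∀ n, 0 < u n) (hu0 : Tendsto u atTop (𝓝 0)) {s z : ℝ}
    (hz : z < 0) (ht : Tendsto (fun n => t n / √(u n)) atTop (𝓝 s)) :
    Tendsto (fun n => (Real.cos (t n) / (1 + u n * z) - 1) / u n) atTop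
      (𝓝 (|z| - s ^ 2 / 2)) := by
  have h1 := aux_cos_lim hupos hu0 ht
  have h2 : Tendsto (fun n => 1 + u n * z) atTop (𝓝 1) := by
    simpa using (hu0.mul_const z).const_add 1
  have h3 := (h1.const_sub (-z)).div h2 one_ne_zero
  rw [div_one, ← abs_of_neg hz] at h3
  refine h3.congr' ?_
  filter_upwards [h2.eventually (lt_mem_nhds one_pos)] with n hn
  have := (hupos n).ne'
  simp only [Pi.div_apply]
  rw [abs_of_neg hz]
  generalize hd : 1 + u n * z = d at *
  have hd0 := hn.ne'
  have hz' : -z = (1 - d) / u n := by rw [← hd]; field_simp; ring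
  rw [hz']
  field_simp
  ring

lemma aux_fold {f : ℝ → ℝ} (hf : Function.Periodic f (2 * π)) (hfm : Measurable f)
    (hb : ∀ t, |f t| ≤ 1) :
    ∫ θ in Ioo (-π) π, f θ = (∫ θ in (-(π / 2))..(π / 2), f θ) +
      ∫ θ in (-(π / 2))..(π / 2), f (π - θ) := by
  have hi : ∀ a b, IntervalIntegrable f volume a b := fun a b => by
    rw [intervalIntegrable_iff]
    exact Measure.integrableOn_of_bounded (M := 1) (by simp) hfm.aestronglyMeasurable
      (Eventually.of_forall hb)
  rw [← integral_Ioc_eq_integral_Ioo, ← intervalIntegral.integral_of_le (by linarith [Real.pi_pos])]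
  have h1 := hf.intervalIntegral_add_eq (-π) (-(π / 2))
  rw [show -π + 2 * π = π by ring] at h1
  rw [h1, intervalIntegral.integral_comp_sub_left,
    ← intervalIntegral.integral_add_adjacent_intervals (hi (-(π / 2)) (π / 2)) (hi _ _)]
  congr 2 <;> ring

lemma aux_prob {Ω : Type*} [MeasurableSpace Ω] (μ : Measure Ω) [IsProbabilityMeasure μ]
    (R Θ : Ω → ℝ) (hRm : Measurable R) (hΘm : Measurable Θ)
    (hΘunif : μ.map Θ = (ENNReal.ofReal (2 * π))⁻¹ • volume.restrict (Ioo (-π) π))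
    (hindep : IndepFun R Θ μ) {h : ℝ → ℝ} (hh : Measurable h) :
    (μ {ω | 1 < R ω * h (Θ ω)}).toReal =
      (2 * π)⁻¹ * ∫ θ in Ioo (-π) π, (μ {ω | 1 < R ω * h θ}).toReal := by
  have hm : MeasurableSet {q : ℝ × ℝ | 1 < q.2 * h q.1} :=
    measurableSet_lt measurable_const (measurable_snd.mul (hh.comp measurable_fst))
  have h1 := (indepFun_iff_map_prod_eq_prod_map_map hΘm.aemeasurable hRm.aemeasurable).1 hindep.symm
  have h2 : μ {ω | 1 < R ω * h (Θ ω)} = ∫⁻ θ, μ {ω | 1 < R ω * h θ} ∂(μ.map Θ) := by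
    have := Measure.map_apply (μ := μ) (hΘm.prodMk hRm) hm
    rw [h1, Measure.prod_apply hm] at this
    refine Eq.trans this.symm ?_
    refine lintegral_congr fun θ => ?_
    rw [Measure.map_apply hRm (measurable_prodMk_left hm)]
    rfl
  have h3 : Measurable fun θ => μ {ω | 1 < R ω * h θ} := by
    have := measurable_measure_prodMk_left (ν := μ.map R) hm
    convert this using 2 with θ
    rw [Measure.map_apply hRm (measurable_prodMk_left hm)]
    rfl
  rw [h2, hΘunif, lintegral_smul_measure, integral_toReal h3.aemeasurable
    (Eventually.of_forall fun θ => measure_lt_top _ _), smul_eq_mul, ENNReal.toReal_mul,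
    ENNReal.toReal_inv, ENNReal.toReal_ofReal (by positivity)]

theorem maxima_half_skew_weibull_joint
{Ω : Type*} [MeasurableSpace Ω] (μ : Measure Ω) [IsProbabilityMeasure μ]
    (R Θ : Ω → ℝ) (hRm : Measurable R) (hΘm : Measurable Θ)
    (hRpos : ∀ᵐ ω ∂μ, 0 < R ω)
    (hΘunif : μ.map Θ = (ENNReal.ofReal (2 * π))⁻¹ • volume.restrict (Ioo (-π) π))
    (hindep : IndepFun R Θ μ)
    (X Y : Ω → ℝ)
    (hX : X = fun ω => R ω * Real.cos (Θ ω))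
    (hY : Y = fun ω => R ω * Real.sin (Θ ω))
    (F : ℝ → ℝ)
    (hF : F = fun x => (μ {ω | R ω ≤ x}).toReal)
    (hend1 : ∀ x < 1, F x < 1) (hend2 : ∀ x, 1 ≤ x → F x = 1)
    (α : ℝ) (hα : 0 < α)
    (hWeibull : ∀ x > 0, Tendsto (fun t => (1 - F (1 - t * x)) / (1 - F (1 - t)))
      (nhdsWithin 0 (Ioi 0)) (𝓝 (x ^ α)))
    (u : ℕ → ℝ) (hupos : ∀ n, 0 < u n) (hudec : StrictAnti u)
    (hu0 : Tendsto u atTop (𝓝 0))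
    (hun : Tendsto (fun n : ℕ => (n : ℝ) * Real.sqrt (u n) * (1 - F (1 - u n))) atTop (𝓝 1))
    (ρ : ℕ → ℝ) (hρ : ∀ n, ρ n ∈ Ioc (0 : ℝ) 1)
    (lam : ℝ) (hlam : 0 < lam)
    (hHR : Tendsto (fun n : ℕ => (1 - ρ n) / u n) atTop (𝓝 (2 * lam ^ 2))) :
    ∀ x < (0 : ℝ), ∀ y < (0 : ℝ),
      Tendsto (fun n : ℕ =>
          ((μ {ω | X ω ≤ 1 + u n * x ∧
            ρ n * |X ω| + Real.sqrt (1 - ρ n ^ 2) * Y ω ≤ 1 + u n * y}).toReal) ^ n)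
        atTop (𝓝 (Real.exp (-(Ialpha α *
          (|x| ^ (1 / 2 + α) * Upsilon α ((lam + (y - x) / (2 * lam)) / Real.sqrt (2 * |x|)) +
           |y| ^ (1 / 2 + α) *
             (1 + Upsilon α ((lam + (x - y) / (2 * lam)) / Real.sqrt (2 * |y|)))))))) := by
  intro x hx y hy
  have hs : ∀ n, 0 < √(u n) := fun n => Real.sqrt_pos.2 (hupos n)
  set G : ℝ → ℝ := fun r => 1 - F r with hGdef
  set p : ℝ → ℝ := fun h => (μ {ω | 1 < R ω * h}).toReal with hpdef
  have hF1 : ∀ r, F r = (μ {ω | R ω ≤ r}).toReal := fun r => by rw [hF]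
  have hGR : ∀ r, G r = (μ {ω | r < R ω}).toReal := fun r => by
    have h1 : {ω | r < R ω} = {ω | R ω ≤ r}ᶜ := by ext; simp
    have h2 : MeasurableSet {ω | R ω ≤ r} := hRm measurableSet_Iic
    have h3 := probReal_compl_eq_one_sub (μ := μ) h2
    rw [hGdef, h1]
    simp only
    rw [hF1]
    exact h3.symm
  have hGanti : Antitone G := fun a b hab => by
    rw [hGR, hGR]
    exact ENNReal.toReal_mono (measure_ne_top _ _) (measure_mono fun ω h => lt_of_le_of_lt hab h)
  have hG1 : ∀ r, 1 ≤ r → G r = 0 := fun r hr => by simp [hGdef, hend2 r hr]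
  have hpG : ∀ h, 0 < h → p h = G (1 / h) := fun h hh => by
    rw [hGR]
    simp only [hpdef, div_lt_iff₀ hh]
  have hpmono : Monotone p := fun a b hab => by
    refine ENNReal.toReal_mono (measure_ne_top _ _) (measure_mono_ae ?_)
    filter_upwards [hRpos] with ω hω h
    exact lt_of_lt_of_le h (mul_le_mul_of_nonneg_left hab hω.le)
  have hpnn : ∀ h, 0 ≤ p h := fun h => ENNReal.toReal_nonneg
  have hp0 : ∀ h, h ≤ 1 → p h = 0 := fun h hh => by
    refine le_antisymm ?_ (hpnn h)
    have := hpmono hh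
    rwa [hpG 1 one_pos, hG1 (1 / 1) (by norm_num)] at this
  have hp1 : ∀ h, |p h| ≤ 1 := fun h => by
    rw [abs_of_nonneg (hpnn h)]
    exact measureReal_le_one (μ := μ)
  have hpm : Measurable p := hpmono.measurable
  have hT : ∀ c, Tendsto (fun n : ℕ => (n : ℝ) * √(u n) * G (1 - u n * c)) atTop
      (𝓝 ((max c 0) ^ α)) := by
    intro c
    rcases le_or_gt c 0 with hc | hc
    · rw [max_eq_right hc, Real.zero_rpow hα.ne']
      refine tendsto_const_nhds.congr fun n => ?_
      rw [hG1 _ (by nlinarith [hupos n]), mul_zero]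
    · rw [max_eq_left hc.le]
      have h1 : Tendsto u atTop (𝓝[>] 0) :=
        tendsto_nhdsWithin_iff.2 ⟨hu0, Eventually.of_forall hupos⟩
      have h2 := hun.mul ((hWeibull c hc).comp h1)
      rw [one_mul] at h2
      refine h2.congr fun n => ?_
      have h3 := hend1 (1 - u n) (by linarith [hupos n])
      have h4 : 1 - F (1 - u n) ≠ 0 := by linarith
      simp only [Function.comp, hGdef]
      field_simp
  set φ : ℕ → ℝ := fun n => Real.arccos (ρ n) with hφ
  have hφlim : Tendsto (fun n => φ n / √(u n)) atTop (𝓝 (2 * lam)) :=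
    aux_phi_lim hupos hu0 hρ hlam hHR
  have hφnn : ∀ n, 0 ≤ φ n := fun n => Real.arccos_nonneg _
  have hφle : ∀ n, φ n ≤ π / 2 := fun n => Real.arccos_le_pi_div_two.2 (hρ n).1.le
  have hcosφ : ∀ n, Real.cos (φ n) = ρ n := fun n =>
    Real.cos_arccos (by linarith [(hρ n).1]) (hρ n).2
  have hsinφ : ∀ n, Real.sin (φ n) = √(1 - ρ n ^ 2) := fun n => Real.sin_arccos _
  set h1 : ℕ → ℝ → ℝ := fun n θ => Real.cos θ / (1 + u n * x) with hh1
  set h2 : ℕ → ℝ → ℝ := fun n θ => Real.cos (θ - φ n) / (1 + u n * y) with hh2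
  have hm1 : ∀ n, Measurable (h1 n) := fun n => by fun_prop
  have hm2 : ∀ n, Measurable (h2 n) := fun n => by fun_prop
  have hsm : ∀ z : ℝ, ∀ᶠ n in atTop, u n * |z| ≤ 1 / 2 := fun z => by
    have : Tendsto (fun n => u n * |z|) atTop (𝓝 0) := by simpa using hu0.mul_const |z|
    exact (this.eventually (gt_mem_nhds (show (0 : ℝ) < 1 / 2 by norm_num))).mono fun n h => h.le
  have hW1 : ∀ s, Tendsto (fun n => (h1 n (√(u n) * s) - 1) / u n) atTop
      (𝓝 (|x| - s ^ 2 / 2)) := fun s => by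
    refine aux_W hupos hu0 hx (t := fun n => √(u n) * s) ?_
    refine tendsto_const_nhds.congr fun n => ?_
    rw [mul_div_cancel_left₀ _ (hs n).ne']
  have hW2 : ∀ s, Tendsto (fun n => (h2 n (√(u n) * s) - 1) / u n) atTop
      (𝓝 (|y| - (s - 2 * lam) ^ 2 / 2)) := fun s => by
    refine aux_W hupos hu0 hy (t := fun n => √(u n) * s - φ n) ?_
    refine (hφlim.const_sub s).congr fun n => ?_
    rw [sub_div, mul_div_cancel_left₀ _ (hs n).ne']
  have hW3 : ∀ s, Tendsto (fun n => (max (h1 n (√(u n) * s)) (h2 n (√(u n) * s)) - 1) / u n) atTop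
      (𝓝 (max (|x| - s ^ 2 / 2) (|y| - (s - 2 * lam) ^ 2 / 2))) := fun s => by
    refine ((hW1 s).max (hW2 s)).congr fun n => ?_
    rw [max_div_div_right (hupos n).le, max_sub_sub_right]
  have hd1 : ∀ᶠ n in atTop, ∀ θ, |θ| ≤ π / 2 → 1 < h1 n θ →
      |θ| ≤ √(|x| * π ^ 2 / 2) * √(u n) ∧ h1 n θ ≤ 1 + 2 * |x| * u n := by
    filter_upwards [hsm x] with n hn θ hθ h
    exact aux_comp (hupos n) hx hn (by linarith [Real.pi_pos]) h
  have hd2 : ∀ᶠ n in atTop, ∀ θ, |θ| ≤ π / 2 → 1 < h2 n θ →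
      |θ| ≤ (√(|y| * π ^ 2 / 2) + (2 * lam + 1)) * √(u n) ∧ h2 n θ ≤ 1 + 2 * |y| * u n := by
    filter_upwards [hsm y, hφlim.eventually (gt_mem_nhds (lt_add_one _))] with n hn hn2 θ hθ h
    have hθ' := abs_le.1 hθ
    have h3 : |θ - φ n| ≤ π :=
      abs_le.2 ⟨by linarith [hφle n], by linarith [hφnn n, Real.pi_pos]⟩
    obtain ⟨h4, h5⟩ := aux_comp (hupos n) hy hn h3 h
    refine ⟨?_, h5⟩
    rw [div_lt_iff₀ (hs n)] at hn2
    have h6 := abs_add_le (θ - φ n) (φ n)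
    rw [sub_add_cancel, abs_of_nonneg (hφnn n)] at h6
    linarith
  have hd3 : ∀ᶠ n in atTop, ∀ θ, |θ| ≤ π / 2 → 1 < max (h1 n θ) (h2 n θ) →
      |θ| ≤ (√(|x| * π ^ 2 / 2) + (√(|y| * π ^ 2 / 2) + (2 * lam + 1))) * √(u n) ∧
        max (h1 n θ) (h2 n θ) ≤ 1 + (2 * |x| + 2 * |y|) * u n := by
    filter_upwards [hd1, hd2] with n e1 e2 θ hθ h
    have k1 : 0 ≤ √(|x| * π ^ 2 / 2) * √(u n) := by positivity
    have k2 : 0 ≤ (√(|y| * π ^ 2 / 2) + (2 * lam + 1)) * √(u n) := by positivity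
    have k3 : 0 ≤ 2 * |x| * u n := mul_nonneg (by positivity) (hupos n).le
    have k4 : 0 ≤ 2 * |y| * u n := mul_nonneg (by positivity) (hupos n).le
    have f1 : h1 n θ ≤ 1 + 2 * |x| * u n := by
      by_cases g : 1 < h1 n θ
      · exact (e1 θ hθ g).2
      · linarith
    have f2 : h2 n θ ≤ 1 + 2 * |y| * u n := by
      by_cases g : 1 < h2 n θ
      · exact (e2 θ hθ g).2
      · linarith
    refine ⟨?_, max_le (by linarith) (by linarith)⟩
    rcases lt_max_iff.1 h with g | g
    · have := (e1 θ hθ g).1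
      linarith
    · have := (e2 θ hθ g).1
      linarith
  have L3 := aux_dct hα hGanti hG1 hpG hp0 hpm hupos hu0 hT
    (h := fun n θ => max (h1 n θ) (h2 n θ)) (fun n => (hm1 n).max (hm2 n)) hW3 hd3
  have L2 := aux_dct hα hGanti hG1 hpG hp0 hpm hupos hu0 hT hm2 hW2 hd2
  rw [aux_full hα (abs_pos.2 hy.ne)] at L2
  rw [aux_max hα hlam hx hy] at L3
  have L := ((L3.add L2).const_mul (2 * π)⁻¹)
  set a : ℕ → ℝ := fun n => (μ {ω | X ω ≤ 1 + u n * x ∧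
            ρ n * |X ω| + Real.sqrt (1 - ρ n ^ 2) * Y ω ≤ 1 + u n * y}).toReal with ha
  have key : ∀ᶠ n : ℕ in atTop, (2 * π)⁻¹ *
      ((∫ θ in (-(π / 2))..(π / 2), p (max (h1 n θ) (h2 n θ))) +
        ∫ θ in (-(π / 2))..(π / 2), p (h2 n θ)) = 1 - a n := by
    filter_upwards [hsm x, hsm y] with n hnx hny
    rw [abs_of_neg hx] at hnx
    rw [abs_of_neg hy] at hny
    have hax : 0 < 1 + u n * x := by linarith
    have hay : 0 < 1 + u n * y := by linarith
    set H : ℝ → ℝ := fun θ => max (Real.cos θ / (1 + u n * x))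
      ((ρ n * |Real.cos θ| + √(1 - ρ n ^ 2) * Real.sin θ) / (1 + u n * y)) with hH
    have hHm : Measurable H := by fun_prop
    have hHper : Function.Periodic (fun θ => p (H θ)) (2 * π) := fun θ => by
      simp only [hH, Real.cos_add_two_pi, Real.sin_add_two_pi]
    have hXm : Measurable X := by rw [hX]; fun_prop
    have hYm : Measurable Y := by rw [hY]; fun_prop
    have hms : MeasurableSet {ω | X ω ≤ 1 + u n * x ∧
            ρ n * |X ω| + Real.sqrt (1 - ρ n ^ 2) * Y ω ≤ 1 + u n * y} :=
      (measurableSet_le hXm measurable_const).inter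
        (measurableSet_le ((hXm.abs.const_mul (ρ n)).add (hYm.const_mul _)) measurable_const)
    have e1 := probReal_compl_eq_one_sub (μ := μ) hms
    have e2 : μ.real {ω | X ω ≤ 1 + u n * x ∧
            ρ n * |X ω| + Real.sqrt (1 - ρ n ^ 2) * Y ω ≤ 1 + u n * y}ᶜ
        = (μ {ω | 1 < R ω * H (Θ ω)}).toReal := by
      rw [measureReal_def]
      congr 1
      apply measure_congr
      filter_upwards [hRpos] with ω hω
      apply propext
      change ¬ (X ω ≤ 1 + u n * x ∧
            ρ n * |X ω| + Real.sqrt (1 - ρ n ^ 2) * Y ω ≤ 1 + u n * y) ↔ 1 < R ω * H (Θ ω)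
      simp only [hH]
      rw [mul_max_of_nonneg _ _ hω.le, lt_max_iff, not_and_or, not_le, not_le, ← mul_div_assoc,
        ← mul_div_assoc, lt_div_iff₀ hax, lt_div_iff₀ hay, hX, hY]
      simp only [abs_mul, abs_of_pos hω, one_mul]
      rw [show ρ n * (R ω * |Real.cos (Θ ω)|) + √(1 - ρ n ^ 2) * (R ω * Real.sin (Θ ω)) =
        R ω * (ρ n * |Real.cos (Θ ω)| + √(1 - ρ n ^ 2) * Real.sin (Θ ω)) by ring]
    rw [e2, aux_prob μ R Θ hRm hΘm hΘunif hindep hHm] at e1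
    refine Eq.trans ?_ e1
    congr 1
    refine Eq.trans ?_ (aux_fold hHper (hpm.comp hHm) (fun t => hp1 _)).symm
    have hcos : ∀ θ ∈ uIcc (-(π / 2)) (π / 2), 0 ≤ Real.cos θ := fun θ hθ => by
      rw [uIcc_of_le (by linarith [Real.pi_pos])] at hθ
      exact Real.cos_nonneg_of_mem_Icc hθ
    have hc2 : ∀ θ, h2 n θ =
        (ρ n * Real.cos θ + √(1 - ρ n ^ 2) * Real.sin θ) / (1 + u n * y) := fun θ => by
      simp only [hh2]
      rw [Real.cos_sub, hcosφ, hsinφ]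
      ring
    congr 1
    · refine intervalIntegral.integral_congr fun θ hθ => ?_
      simp only [hH]
      rw [abs_of_nonneg (hcos θ hθ), hc2]
    · refine intervalIntegral.integral_congr fun θ hθ => ?_
      have hcc := hcos θ hθ
      simp only [hH]
      rw [Real.cos_pi_sub, Real.sin_pi_sub, abs_neg, abs_of_nonneg hcc, ← hc2]
      have hneg : -Real.cos θ / (1 + u n * x) ≤ 0 :=
        div_nonpos_of_nonpos_of_nonneg (by linarith) hax.le
      rcases le_or_gt (-Real.cos θ / (1 + u n * x)) (h2 n θ) with g | g
      · rw [max_eq_right g]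
      · rw [max_eq_left g.le, hp0 _ (by linarith), hp0 _ (by linarith)]
  have fin := Real.tendsto_one_add_pow_exp_of_tendsto (g := fun n => -(1 - a n))
    (t := -(Ialpha α *
          (|x| ^ (1 / 2 + α) * Upsilon α ((lam + (y - x) / (2 * lam)) / Real.sqrt (2 * |x|)) +
           |y| ^ (1 / 2 + α) *
             (1 + Upsilon α ((lam + (x - y) / (2 * lam)) / Real.sqrt (2 * |y|)))))) ?_
  · refine fin.congr fun n => ?_
    congr 1
    ring
  · have L' := L.neg
    have hπ := Real.pi_ne_zero
    convert L'.congr' ?_ using 2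
    · field_simp
      ring
    · filter_upwards [key] with n hn
      rw [← hn]
      ring
end

section
/- For all x < 0 and y < 0, lim_{n→∞} n·P(X > 1 + u_n·x, ρ_n|X| + √(1-ρ_n²)·Y > 1 + u_n·y) = I_α·(|x|^{1/2+α}·(1 - Υ_α((λ + (y-x)/(2λ))/√(2|x|))) + |y|^{1/2+α}·(1 - Υ_α((λ + (x-y)/(2λ))/√(2|y|)))). -/
open MeasureTheory Filter Real Set ProbabilityTheory Topology

lemma beta_aux (α : ℝ) (hα : 0 < α) :
    ∫ s in Set.Icc (-1 : ℝ) 1, (1 - s ^ 2) ^ α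
      = √π * (Real.Gamma (α + 1) / Real.Gamma (α + 3 / 2)) := by
  rw [integral_Icc_eq_integral_Ioc, ← intervalIntegral.integral_of_le (by norm_num)]
  have h1 := intervalIntegral.integral_comp_mul_sub (a := 0) (b := 1) (c := 2)
    (fun s : ℝ => (1 - s ^ 2) ^ α) (by norm_num) 1
  norm_num at h1
  have h2 : ∫ x in (0:ℝ)..1, (1 - (2 * x - 1) ^ 2) ^ α
      = 4 ^ α * ∫ x in (0:ℝ)..1, x ^ α * (1 - x) ^ α := by
    rw [← intervalIntegral.integral_const_mul]
    apply intervalIntegral.integral_congr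
    intro x hx
    rw [uIcc_of_le (by norm_num)] at hx
    have : 0 ≤ 1 - x := by linarith [hx.2]
    simp only
    rw [← Real.mul_rpow hx.1 this, ← Real.mul_rpow (by norm_num) (mul_nonneg hx.1 this)]
    congr 1; ring
  have h3 : ∫ x in (0:ℝ)..1, x ^ α * (1 - x) ^ α = ProbabilityTheory.beta (α + 1) (α + 1) := by
    rw [ProbabilityTheory.beta_eq_betaIntegralReal _ _ (by linarith) (by linarith),
      Complex.betaIntegral]
    have : ∫ x in (0:ℝ)..1, (x : ℂ) ^ (((α + 1 : ℝ) : ℂ) - 1) * (1 - (x : ℂ)) ^ (((α + 1 : ℝ) : ℂ) - 1)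
        = ((∫ x in (0:ℝ)..1, x ^ α * (1 - x) ^ α : ℝ) : ℂ) := by
      rw [← intervalIntegral.integral_ofReal]
      apply intervalIntegral.integral_congr
      intro x hx
      rw [uIcc_of_le (by norm_num)] at hx
      have : 0 ≤ 1 - x := by linarith [hx.2]
      simp only
      push_cast
      rw [Complex.ofReal_cpow hx.1, Complex.ofReal_cpow this]
      push_cast
      simp
    rw [this, Complex.ofReal_re]
  have h4 := Real.Gamma_mul_Gamma_add_half (α + 1)
  have e1 : α + 1 + 1 / 2 = α + 3 / 2 := by ring
  have e2 : 1 - 2 * (α + 1) = -1 + -(2 * α) := by ring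
  have e3 : α + 1 + (α + 1) = 2 * (α + 1) := by ring
  have p1 := Real.Gamma_pos_of_pos (s := α + 3 / 2) (by linarith)
  have p2 := Real.Gamma_pos_of_pos (s := 2 * (α + 1)) (by linarith)
  have p4 : (4:ℝ) ^ α = 2 ^ (2 * α) := by
    rw [Real.rpow_mul (by norm_num)]; norm_num
  have p5 : (2:ℝ) ^ (2 * α) > 0 := by positivity
  rw [e1, e2, Real.rpow_add (by norm_num), Real.rpow_neg (by norm_num) (2 * α)] at h4
  rw [ProbabilityTheory.beta, e3] at h3
  rw [h2, h3, p4] at h1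
  generalize (2:ℝ) ^ (2 * α) = q at *
  have h5 : ∫ s in (-1:ℝ)..1, (1 - s ^ 2) ^ α
     = 2 * (q * (Real.Gamma (α + 1) * Real.Gamma (α + 1) / Real.Gamma (2 * (α + 1)))) := by
    rw [h1]; ring
  rw [h5]
  have h6 : Real.Gamma (α + 1) = Real.Gamma (2 * (α + 1)) * (2 ^ (-1:ℝ) * q⁻¹) * √π / Real.Gamma (α + 3 / 2) := by
    rw [← h4]; field_simp
  nth_rewrite 1 [h6]
  rw [Real.rpow_neg_one]
  field_simp

lemma cont_h (α : ℝ) (hα : 0 < α) (f : ℝ → ℝ) (hf : Continuous f) :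
    Continuous (fun s => (max (f s) 0) ^ α) :=
  (hf.max continuous_const).rpow_const (fun _ => Or.inr hα.le)

lemma integrable_h (α : ℝ) (hα : 0 < α) (a : ℝ) (f : ℝ → ℝ) (hf : Continuous f)
    (hle : ∀ s, f s ≤ a - s ^ 2 / 2) :
    Integrable (fun s => (max (f s) 0) ^ α) := by
  apply (cont_h α hα f hf).integrable_of_hasCompactSupport
  apply HasCompactSupport.intro (isCompact_Icc (a := -(2 * |a| + 2)) (b := 2 * |a| + 2))
  intro s hs
  have : f s ≤ 0 := by
    refine (hle s).trans ?_
    by_contra! h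
    apply hs
    have h1 := le_abs_self a
    constructor <;> nlinarith [abs_nonneg a, sq_nonneg (s+1), sq_nonneg (s-1)]
  rw [max_eq_right this, Real.zero_rpow hα.ne']

lemma tail_aux (α : ℝ) (hα : 0 < α) (a : ℝ) (ha : 0 < a) (c : ℝ) :
    ∫ s in Ioi c, (max (a - s ^ 2 / 2) 0) ^ α
      = 2 * π * (Ialpha α * (a ^ (1 / 2 + α) * (1 - Upsilon α (c / √(2 * a))))) := by
  have hb : 0 < √(2 * a) := by positivity
  have hbs : √(2 * a) ^ 2 = 2 * a := Real.sq_sqrt (by positivity)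
  have h1 := integral_comp_mul_left_Ioi (fun s : ℝ => (max (a - s ^ 2 / 2) 0) ^ α) (c / √(2 * a)) hb
  rw [mul_div_cancel₀ _ hb.ne'] at h1
  have h2 : ∀ t : ℝ, (max (a - (√(2 * a) * t) ^ 2 / 2) 0) ^ α
      = a ^ α * (Icc (-1:ℝ) 1).indicator (fun s => (1 - s ^ 2) ^ α) t := by
    intro t
    rw [mul_pow, hbs]
    by_cases ht : t ∈ Icc (-1:ℝ) 1
    · rw [indicator_of_mem ht]
      have : 0 ≤ 1 - t ^ 2 := by nlinarith [ht.1, ht.2]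
      rw [max_eq_left (by nlinarith), ← Real.mul_rpow ha.le this]
      congr 1; ring
    · rw [indicator_of_notMem ht]
      have : 1 - t ^ 2 ≤ 0 := by
        by_contra! h
        exact ht (abs_le.1 (by rw [← sq_le_one_iff_abs_le_one]; linarith))
      rw [max_eq_right (by nlinarith), Real.zero_rpow hα.ne', mul_zero]
  simp_rw [h2] at h1
  rw [integral_const_mul] at h1
  set t0 := c / √(2 * a)
  set k : ℝ → ℝ := (Icc (-1:ℝ) 1).indicator (fun s => (1 - s ^ 2) ^ α) with hk
  have hki : Integrable k := by
    rw [hk, integrable_indicator_iff measurableSet_Icc]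
    apply ContinuousOn.integrableOn_compact isCompact_Icc
    apply Continuous.continuousOn
    exact (by fun_prop : Continuous fun s : ℝ => 1 - s ^ 2).rpow_const (fun _ => Or.inr hα.le)
  have h3 := intervalIntegral.integral_Iic_add_Ioi (b := t0) hki.integrableOn hki.integrableOn
  have h4 : ∫ s in Iic t0, k s = ∫ s in Icc (-1 : ℝ) (min t0 1), (1 - s ^ 2) ^ α := by
    rw [hk, setIntegral_indicator measurableSet_Icc]
    congr 2
    ext s; simp only [mem_inter_iff, mem_Iic, mem_Icc, le_min_iff]; tauto
  have h5 : ∫ s, k s = ∫ s in Icc (-1 : ℝ) 1, (1 - s ^ 2) ^ α := by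
    rw [hk, integral_indicator measurableSet_Icc]
  have hB := beta_aux α hα
  have hBp : 0 < √π * (Real.Gamma (α + 1) / Real.Gamma (α + 3 / 2)) := by
    have p1 := Real.Gamma_pos_of_pos (s := α + 3 / 2) (by linarith)
    have p2 := Real.Gamma_pos_of_pos (s := (α + 1)) (by linarith)
    positivity
  have h6 : ∫ s in Ioi t0, k s = (√π * (Real.Gamma (α + 1) / Real.Gamma (α + 3 / 2))) * (1 - Upsilon α t0) := by
    rw [Upsilon, ← h4, hB, mul_sub, mul_div_cancel₀ _ hBp.ne', ← hB, ← h5, ← h3]; ring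
  have h7 : ∫ s in Ioi c, (max (a - s ^ 2 / 2) 0) ^ α = √(2 * a) * (a ^ α * ∫ s in Ioi t0, k s) := by
    rw [h1, smul_eq_mul, mul_inv_cancel_left₀ hb.ne']
  rw [h7, h6, Ialpha, Real.rpow_add ha, ← Real.sqrt_eq_rpow, Real.sqrt_mul (by norm_num), Real.sqrt_mul (by norm_num)]
  have q1 : √π * √π = π := Real.mul_self_sqrt pi_pos.le
  have q2 : √2 * √2 = 2 := Real.mul_self_sqrt (by norm_num)
  have q3 : 2 * π * (√2 * √π)⁻¹ = √2 * √π := by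
    have : √2 * √π ≠ 0 := by positivity
    field_simp
    nlinarith
  calc _ = (√2 * √π) * (√a * a ^ α * (Real.Gamma (α + 1) / Real.Gamma (α + 3 / 2)) * (1 - Upsilon α t0)) := by ring
    _ = (2 * π * (√2 * √π)⁻¹) * (√a * a ^ α * (Real.Gamma (α + 1) / Real.Gamma (α + 3 / 2)) * (1 - Upsilon α t0)) := by rw [q3]
    _ = _ := by ring

lemma limit_integral (α : ℝ) (hα : 0 < α) (x y lam : ℝ) (hx : x < 0) (hy : y < 0) (hl : 0 < lam) :
    ∫ s, (max (min (-x - s ^ 2 / 2) (-y - (s - 2 * lam) ^ 2 / 2)) 0) ^ α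
      = 2 * π * (Ialpha α *
          (|x| ^ (1 / 2 + α) *
              (1 - Upsilon α ((lam + (y - x) / (2 * lam)) / Real.sqrt (2 * |x|))) +
           |y| ^ (1 / 2 + α) *
              (1 - Upsilon α ((lam + (x - y) / (2 * lam)) / Real.sqrt (2 * |y|))))) := by
  rw [abs_of_neg hx, abs_of_neg hy, mul_add, mul_add, ← tail_aux α hα (-x) (by linarith),
    ← tail_aux α hα (-y) (by linarith)]
  set f : ℝ → ℝ := fun s => min (-x - s ^ 2 / 2) (-y - (s - 2 * lam) ^ 2 / 2) with hf
  have hi : Integrable (fun s => (max (f s) 0) ^ α) :=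
    integrable_h α hα (-x) f (by fun_prop) (fun s => min_le_left _ _)
  have key : ∀ s, (lam + (y - x) / (2 * lam)) ≤ s ↔ -x - s ^ 2 / 2 ≤ -y - (s - 2 * lam) ^ 2 / 2 := by
    intro s
    have : (2 * lam) * (lam + (y - x) / (2 * lam)) = 2 * lam ^ 2 + (y - x) := by field_simp
    rw [← mul_le_mul_iff_right₀ (show 0 < 2 * lam by linarith), this]
    constructor <;> intro h <;> nlinarith
  rw [← intervalIntegral.integral_Iic_add_Ioi (b := lam + (y - x) / (2 * lam)) hi.integrableOn hi.integrableOn, add_comm]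
  congr 1
  · apply setIntegral_congr_fun measurableSet_Ioi
    intro s hs
    simp only [hf]
    rw [min_eq_left ((key s).1 (le_of_lt hs))]
  · rw [← integral_Ici_eq_integral_Ioi, ← integral_indicator measurableSet_Ici,
      ← integral_sub_left_eq_self ((Ici (lam + (x - y) / (2 * lam))).indicator _) volume (2 * lam), ← integral_indicator measurableSet_Iic]
    congr 1
    ext s
    have e : 2 * lam - s ∈ Ici (lam + (x - y) / (2 * lam)) ↔ s ∈ Iic (lam + (y - x) / (2 * lam)) := by
      have : (x - y) / (2 * lam) = - ((y - x) / (2 * lam)) := by ring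
      simp only [mem_Ici, mem_Iic, this]
      constructor <;> intro h <;> linarith
    by_cases hs : s ∈ Iic (lam + (y - x) / (2 * lam))
    · rw [indicator_of_mem hs, indicator_of_mem (e.2 hs)]
      simp only [hf]
      have : -y - (s - 2 * lam) ^ 2 / 2 ≤ -x - s ^ 2 / 2 := by
        rcases eq_or_lt_of_le (mem_Iic.1 hs) with h | h
        · have h0 : (2 * lam) * (lam + (y - x) / (2 * lam)) = 2 * lam ^ 2 + (y - x) := by field_simp
          rw [← h] at h0
          nlinarith
        · exact le_of_lt (not_le.1 (fun h' => absurd ((key s).2 h') (not_le.2 h)))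
      rw [min_eq_right this]
      congr 3; ring
    · rw [indicator_of_notMem hs, indicator_of_notMem (fun h => hs (e.1 h))]

lemma ratio_aux (G : ℝ → ℝ) (hG : Antitone G) (hpos : ∀ r < 1, 0 < G r) (hnn : ∀ r, 0 ≤ G r)
    (α : ℝ) (hα : 0 < α)
    (hW : ∀ x > 0, Tendsto (fun t => G (1 - t * x) / G (1 - t)) (nhdsWithin 0 (Ioi 0)) (𝓝 (x ^ α)))
    (u : ℕ → ℝ) (hupos : ∀ n, 0 < u n) (hu0 : Tendsto u atTop (𝓝 0))
    (q : ℕ → ℝ) (q0 : ℝ) (hq : Tendsto q atTop (𝓝 q0)) :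
    Tendsto (fun n => G (1 - u n * q n) / G (1 - u n)) atTop (𝓝 ((max q0 0) ^ α)) := by
  have hu : Tendsto u atTop (nhdsWithin 0 (Ioi 0)) :=
    tendsto_nhdsWithin_iff.2 ⟨hu0, Eventually.of_forall hupos⟩
  have hc : Continuous (fun z : ℝ => z ^ α) := Real.continuous_rpow_const hα.le
  have hGp : ∀ n, 0 < G (1 - u n) := fun n => hpos _ (by linarith [hupos n])
  rw [tendsto_order]
  constructor
  · intro b hb
    by_cases h0 : q0 ≤ 0
    · rw [max_eq_right h0, Real.zero_rpow hα.ne'] at hb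
      exact Eventually.of_forall fun n => lt_of_lt_of_le hb (div_nonneg (hnn _) (hnn _))
    · push Not at h0
      rw [max_eq_left h0.le] at hb
      have h1 : ∀ᶠ z in 𝓝[<] q0, b < z ^ α :=
        ((hc.tendsto q0).eventually (lt_mem_nhds hb)).filter_mono nhdsWithin_le_nhds
      have h2 : ∀ᶠ z in 𝓝[<] q0, 0 < z := (lt_mem_nhds h0).filter_mono nhdsWithin_le_nhds
      obtain ⟨z, ⟨hz1, hz2⟩, hz3⟩ := ((h1.and h2).and self_mem_nhdsWithin).exists
      filter_upwards [((hW z hz2).comp hu).eventually (lt_mem_nhds hz1),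
        hq.eventually (lt_mem_nhds hz3)] with n hn1 hn2
      refine lt_of_lt_of_le hn1 ?_
      simp only [Function.comp]
      apply div_le_div_of_nonneg_right _ (hnn _)
      apply hG
      nlinarith [hupos n]
  · intro b hb
    have h1 : ∀ᶠ z in 𝓝[>] (max q0 0), z ^ α < b :=
      ((hc.tendsto (max q0 0)).eventually (gt_mem_nhds hb)).filter_mono nhdsWithin_le_nhds
    obtain ⟨z, hz1, hz3⟩ := (h1.and self_mem_nhdsWithin).exists
    have hz0 : 0 < z := lt_of_le_of_lt (le_max_right _ _) hz3
    have hzq : q0 < z := lt_of_le_of_lt (le_max_left _ _) hz3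
    filter_upwards [((hW z hz0).comp hu).eventually (gt_mem_nhds hz1),
      hq.eventually (gt_mem_nhds hzq)] with n hn1 hn2
    refine lt_of_le_of_lt ?_ hn1
    simp only [Function.comp]
    apply div_le_div_of_nonneg_right _ (hnn _)
    apply hG
    nlinarith [hupos n]

lemma sin_aux (u : ℕ → ℝ) (hupos : ∀ n, 0 < u n) (hu0 : Tendsto u atTop (𝓝 0)) (s : ℝ) :
    Tendsto (fun n => Real.sin (√(u n) * s) / √(u n)) atTop (𝓝 s) := by
  have hd : HasDerivAt (fun t : ℝ => Real.sin (t * s)) s 0 := by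
    have := ((hasDerivAt_id (0:ℝ)).mul_const s).sin
    simpa using this
  have hs : Tendsto (fun n => √(u n)) atTop (𝓝[≠] 0) := by
    apply tendsto_nhdsWithin_iff.2 ⟨by simpa using hu0.sqrt, Eventually.of_forall fun n => ?_⟩
    exact (Real.sqrt_pos.2 (hupos n)).ne'
  have := (hasDerivAt_iff_tendsto_slope_zero.1 hd).comp hs
  refine this.congr fun n => ?_
  simp [div_eq_inv_mul]

lemma cos_aux (u : ℕ → ℝ) (hupos : ∀ n, 0 < u n) (hu0 : Tendsto u atTop (𝓝 0)) (s : ℝ) :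
    Tendsto (fun n => (1 - Real.cos (√(u n) * s)) / u n) atTop (𝓝 (s ^ 2 / 2)) := by
  have h := ((sin_aux u hupos hu0 (s / 2)).pow 2).const_mul 2
  have e : 2 * (s / 2) ^ 2 = s ^ 2 / 2 := by ring
  rw [e] at h
  refine h.congr fun n => ?_
  rw [div_pow, Real.sq_sqrt (hupos n).le, Real.sin_sq_eq_half_sub, ← mul_div_assoc]
  congr 1
  have : 2 * (√(u n) * (s / 2)) = √(u n) * s := by ring
  rw [this]; ring

lemma D_aux (u : ℕ → ℝ) (hupos : ∀ n, 0 < u n) (hu0 : Tendsto u atTop (𝓝 0))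
    (ρ : ℕ → ℝ) (hρ : ∀ n, ρ n ∈ Ioc (0 : ℝ) 1)
    (lam : ℝ) (hlam : 0 < lam)
    (hHR : Tendsto (fun n : ℕ => (1 - ρ n) / u n) atTop (𝓝 (2 * lam ^ 2))) (s : ℝ) :
    Tendsto (fun n => (1 - (ρ n * Real.cos (√(u n) * s) + √(1 - ρ n ^ 2) * Real.sin (√(u n) * s))) / u n)
      atTop (𝓝 ((s - 2 * lam) ^ 2 / 2)) := by
  have hρ1 : Tendsto ρ atTop (𝓝 1) := by
    have := (hHR.mul hu0).const_sub 1
    simp only [mul_zero, sub_zero] at this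
    refine this.congr fun n => ?_
    rw [div_mul_cancel₀ _ (hupos n).ne']; ring
  have hw : Tendsto (fun n => √(1 - ρ n ^ 2) / √(u n)) atTop (𝓝 (2 * lam)) := by
    have h1 := (hHR.mul (hρ1.const_add 1)).sqrt
    have e : √(2 * lam ^ 2 * (1 + 1)) = 2 * lam := by
      rw [show 2 * lam ^ 2 * (1 + 1) = (2 * lam) ^ 2 by ring, Real.sqrt_sq (by linarith)]
    rw [e] at h1
    refine h1.congr fun n => ?_
    rw [← Real.sqrt_div' _ (hupos n).le]
    congr 1; ring
  have h := (hHR.add (hρ1.mul (cos_aux u hupos hu0 s))).sub (hw.mul (sin_aux u hupos hu0 s))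
  have e : 2 * lam ^ 2 + 1 * (s ^ 2 / 2) - 2 * lam * s = (s - 2 * lam) ^ 2 / 2 := by ring
  rw [e] at h
  refine h.congr fun n => ?_
  have h1 : √(1 - ρ n ^ 2) / √(u n) * (Real.sin (√(u n) * s) / √(u n))
      = √(1 - ρ n ^ 2) * Real.sin (√(u n) * s) / u n := by
    rw [div_mul_div_comm, Real.mul_self_sqrt (hupos n).le]
  rw [h1]; ring

lemma to_one_aux (u : ℕ → ℝ) (hupos : ∀ n, 0 < u n) (hu0 : Tendsto u atTop (𝓝 0))
    (c : ℕ → ℝ) (k : ℝ) (hc : Tendsto (fun n => (1 - c n) / u n) atTop (𝓝 k)) :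
    Tendsto c atTop (𝓝 1) := by
  have := (hc.mul hu0).const_sub 1
  simp only [mul_zero, sub_zero] at this
  refine this.congr fun n => ?_
  rw [div_mul_cancel₀ _ (hupos n).ne']; ring

lemma q_aux (u : ℕ → ℝ) (hupos : ∀ n, 0 < u n) (hu0 : Tendsto u atTop (𝓝 0))
    (c : ℕ → ℝ) (k x : ℝ) (hc : Tendsto (fun n => (1 - c n) / u n) atTop (𝓝 k)) :
    Tendsto (fun n => (1 - (1 + u n * x) / c n) / u n) atTop (𝓝 (-x - k)) := by
  have h1 := to_one_aux u hupos hu0 c k hc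
  have h2 := (hc.const_sub (-x)).div h1 one_ne_zero
  rw [div_one] at h2
  refine h2.congr' ?_
  filter_upwards [h1.eventually (lt_mem_nhds (show (0:ℝ) < 1 by norm_num))] with n hn
  have := hupos n
  simp only [Pi.div_apply]
  field_simp
  ring

lemma prod_aux {Ω : Type*} [MeasurableSpace Ω] (μ : Measure Ω) [IsProbabilityMeasure μ]
    (R Θ : Ω → ℝ) (hRm : Measurable R) (hΘm : Measurable Θ)
    (hΘunif : μ.map Θ = (ENNReal.ofReal (2 * π))⁻¹ • volume.restrict (Ioo (-π) π))
    (hindep : IndepFun R Θ μ) (S : Set (ℝ × ℝ)) (hS : MeasurableSet S) :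
    (μ {ω | (R ω, Θ ω) ∈ S}).toReal
      = (2 * π)⁻¹ * ∫ θ in Ioo (-π) π, (μ.map R ((fun r => (r, θ)) ⁻¹' S)).toReal := by
  haveI := Measure.isProbabilityMeasure_map (μ := μ) hRm.aemeasurable
  haveI := Measure.isProbabilityMeasure_map (μ := μ) hΘm.aemeasurable
  have h1 := (indepFun_iff_map_prod_eq_prod_map_map hRm.aemeasurable hΘm.aemeasurable).1 hindep
  have h2 : μ {ω | (R ω, Θ ω) ∈ S} = ((μ.map R).prod (μ.map Θ)) S := by
    rw [← h1, Measure.map_apply (hRm.prodMk hΘm) hS]; rfl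
  rw [h2, Measure.prod_apply_symm hS, hΘunif, lintegral_smul_measure, smul_eq_mul, ENNReal.toReal_mul,
    ENNReal.toReal_inv, ENNReal.toReal_ofReal (by positivity), integral_toReal]
  · exact (measurable_measure_prodMk_right hS).aemeasurable
  · exact Eventually.of_forall fun θ => measure_lt_top _ _

theorem joint_tail_half_skew_weibull
{Ω : Type*} [MeasurableSpace Ω] (μ : Measure Ω) [IsProbabilityMeasure μ]
    (R Θ : Ω → ℝ) (hRm : Measurable R) (hΘm : Measurable Θ)
    (hRpos : ∀ᵐ ω ∂μ, 0 < R ω)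
    (hΘunif : μ.map Θ = (ENNReal.ofReal (2 * π))⁻¹ • volume.restrict (Ioo (-π) π))
    (hindep : IndepFun R Θ μ)
    (X Y : Ω → ℝ)
    (hX : X = fun ω => R ω * Real.cos (Θ ω))
    (hY : Y = fun ω => R ω * Real.sin (Θ ω))
    (F : ℝ → ℝ)
    (hF : F = fun x => (μ {ω | R ω ≤ x}).toReal)
    (hend1 : ∀ x < 1, F x < 1) (hend2 : ∀ x, 1 ≤ x → F x = 1)
    (α : ℝ) (hα : 0 < α)
    (hWeibull : ∀ x > 0, Tendsto (fun t => (1 - F (1 - t * x)) / (1 - F (1 - t)))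
      (nhdsWithin 0 (Ioi 0)) (𝓝 (x ^ α)))
    (u : ℕ → ℝ) (hupos : ∀ n, 0 < u n) (hudec : StrictAnti u)
    (hu0 : Tendsto u atTop (𝓝 0))
    (hun : Tendsto (fun n : ℕ => (n : ℝ) * Real.sqrt (u n) * (1 - F (1 - u n))) atTop (𝓝 1))
    (ρ : ℕ → ℝ) (hρ : ∀ n, ρ n ∈ Ioc (0 : ℝ) 1)
    (lam : ℝ) (hlam : 0 < lam)
    (hHR : Tendsto (fun n : ℕ => (1 - ρ n) / u n) atTop (𝓝 (2 * lam ^ 2))) :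
    ∀ x < (0 : ℝ), ∀ y < (0 : ℝ),
      Tendsto (fun n : ℕ =>
          (n : ℝ) * (μ {ω | 1 + u n * x < X ω ∧
            1 + u n * y < ρ n * |X ω| + Real.sqrt (1 - ρ n ^ 2) * Y ω}).toReal)
        atTop (𝓝 (Ialpha α *
          (|x| ^ (1 / 2 + α) *
              (1 - Upsilon α ((lam + (y - x) / (2 * lam)) / Real.sqrt (2 * |x|))) +
           |y| ^ (1 / 2 + α) *
              (1 - Upsilon α ((lam + (x - y) / (2 * lam)) / Real.sqrt (2 * |y|)))))) := by
  intro x hx y hy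
  have : IsProbabilityMeasure (μ.map R) := Measure.isProbabilityMeasure_map hRm.aemeasurable
  set ν := μ.map R with hν
  set G : ℝ → ℝ := fun r => 1 - F r with hGdef
  have hGν : ∀ r, G r = (ν (Ioi r)).toReal := by
    intro r
    have h1 : F r = (ν (Iic r)).toReal := by
      rw [hF, hν, Measure.map_apply hRm measurableSet_Iic]; rfl
    have h2 : ν.real (Iic r)ᶜ = 1 - ν.real (Iic r) := by
      rw [measureReal_compl measurableSet_Iic]; simp
    rw [compl_Iic] at h2
    simp only [hGdef, h1]
    exact h2.symm
  have hG : Antitone G := by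
    intro a b hab
    rw [hGν, hGν]
    exact ENNReal.toReal_mono (measure_ne_top _ _) (measure_mono (Ioi_subset_Ioi hab))
  have hGpos : ∀ r < 1, 0 < G r := fun r hr => by simp only [hGdef]; linarith [hend1 r hr]
  have hGnn : ∀ r, 0 ≤ G r := fun r => by rw [hGν]; exact ENNReal.toReal_nonneg
  have hG1 : ∀ r, 1 ≤ r → G r = 0 := fun r hr => by simp only [hGdef]; linarith [hend2 r hr]
  have hratio := ratio_aux G hG hGpos hGnn α hα hWeibull u hupos hu0
  have hνpos : ∀ᵐ r ∂ν, 0 < r := (ae_map_iff hRm.aemeasurable measurableSet_Ioi).2 hRpos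
  have hνle : ∀ᵐ r ∂ν, r ≤ 1 := by
    have : ν (Ioi 1) = 0 := by
      have := hG1 1 le_rfl
      rw [hGν, ENNReal.toReal_eq_zero_iff] at this
      exact this.resolve_right (measure_ne_top _ _)
    rw [ae_iff]
    simpa [Ioi] using this
  set S : ℕ → Set (ℝ × ℝ) := fun n => {p | 1 + u n * x < p.1 * Real.cos p.2 ∧
    1 + u n * y < ρ n * |p.1 * Real.cos p.2| + √(1 - ρ n ^ 2) * (p.1 * Real.sin p.2)} with hSdef
  have hS : ∀ n, MeasurableSet (S n) := by
    intro n
    have h1 : IsOpen {p : ℝ × ℝ | 1 + u n * x < p.1 * Real.cos p.2} :=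
      isOpen_lt (by fun_prop) (by fun_prop)
    have h2 : IsOpen {p : ℝ × ℝ | 1 + u n * y <
        ρ n * |p.1 * Real.cos p.2| + √(1 - ρ n ^ 2) * (p.1 * Real.sin p.2)} :=
      isOpen_lt (by fun_prop) (by fun_prop)
    exact (h1.inter h2).measurableSet
  set g : ℕ → ℝ → ℝ := fun n => (Ioo (-π) π).indicator
    (fun θ => (ν ((fun r => (r, θ)) ⁻¹' S n)).toReal) with hg
  have hgm : ∀ n, Measurable (g n) := fun n =>
    ((measurable_measure_prodMk_right (hS n)).ennreal_toReal).indicator measurableSet_Ioo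
  have hgnn : ∀ n θ, 0 ≤ g n θ := fun n θ => indicator_nonneg (fun _ _ => ENNReal.toReal_nonneg) _
  have hmain : ∀ n : ℕ, (n : ℝ) * (μ {ω | 1 + u n * x < X ω ∧
            1 + u n * y < ρ n * |X ω| + Real.sqrt (1 - ρ n ^ 2) * Y ω}).toReal
      = (2 * π)⁻¹ * (((n : ℝ) * Real.sqrt (u n) * (1 - F (1 - u n))) *
          ∫ s, g n (√(u n) * s) / G (1 - u n)) := by
    intro n
    have h1 := prod_aux μ R Θ hRm hΘm hΘunif hindep (S n) (hS n)
    have h2 : {ω | (R ω, Θ ω) ∈ S n} = {ω | 1 + u n * x < X ω ∧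
            1 + u n * y < ρ n * |X ω| + Real.sqrt (1 - ρ n ^ 2) * Y ω} := by
      rw [hX, hY]; rfl
    rw [← h2, h1, ← integral_indicator measurableSet_Ioo]
    have h3 := Measure.integral_comp_mul_left (g n) (√(u n))
    have hp : 0 < √(u n) := Real.sqrt_pos.2 (hupos n)
    rw [abs_of_pos (inv_pos.2 hp), smul_eq_mul] at h3
    have hGp : 0 < G (1 - u n) := hGpos _ (by linarith [hupos n])
    have hGe : (1 - F (1 - u n)) = G (1 - u n) := rfl
    rw [integral_div, h3, hGe]
    field_simp
    rfl
  simp_rw [hmain]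
  have hL := limit_integral α hα x y lam hx hy hlam
  suffices hsuff : Tendsto (fun n => ∫ s, g n (√(u n) * s) / G (1 - u n)) atTop
      (𝓝 (∫ s, (max (min (-x - s ^ 2 / 2) (-y - (s - 2 * lam) ^ 2 / 2)) 0) ^ α)) by
    have h := (hun.mul hsuff).const_mul (2 * π)⁻¹
    rw [hL, one_mul, inv_mul_cancel_left₀ (by positivity)] at h
    exact h
  have hux : Tendsto (fun n => 1 + u n * x) atTop (𝓝 1) := by
    simpa using (hu0.mul_const x).const_add 1
  have huxp : ∀ᶠ n in atTop, 0 < 1 + u n * x :=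
    hux.eventually (lt_mem_nhds (by norm_num))
  apply tendsto_integral_filter_of_dominated_convergence
    ((Icc (-(π * (-x + 1))) (π * (-x + 1))).indicator (fun _ => (-x) ^ α + 1))
  · exact Eventually.of_forall fun n =>
      (((hgm n).comp (measurable_const_mul _)).div_const _).aestronglyMeasurable
  · have hb := hratio (fun _ => -x) (-x) tendsto_const_nhds
    rw [max_eq_left (by linarith)] at hb
    filter_upwards [huxp, hb.eventually (gt_mem_nhds (lt_add_one _))] with n hn hn2
    refine Eventually.of_forall fun s => ?_
    have hGp : 0 < G (1 - u n) := hGpos _ (by linarith [hupos n])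
    rw [Real.norm_of_nonneg (div_nonneg (hgnn _ _) hGp.le)]
    have hun := hupos n
    by_cases hs : √(u n) * s ∈ Ioo (-π) π
    swap
    · simp only [hg]
      rw [indicator_of_notMem hs, zero_div]
      exact indicator_nonneg (fun _ _ => add_nonneg (Real.rpow_nonneg (by linarith) _) zero_le_one) _
    have hc1 := Real.cos_le_one (√(u n) * s)
    by_cases hK : s ∈ Icc (-(π * (-x + 1))) (π * (-x + 1))
    · rw [indicator_of_mem hK]
      refine le_trans ?_ hn2.le
      apply div_le_div_of_nonneg_right _ hGp.le
      simp only [hg]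
      rw [indicator_of_mem hs, hGν]
      apply ENNReal.toReal_mono (measure_ne_top _ _)
      apply measure_mono_ae
      filter_upwards [hνpos] with r hr hrS
      have h1 : 1 + u n * x < r * Real.cos (√(u n) * s) := hrS.1
      show 1 - u n * -x < r
      nlinarith
    · rw [indicator_of_notMem hK]
      have h0 : g n (√(u n) * s) = 0 := by
        simp only [hg]
        rw [indicator_of_mem hs]
        have : ν ((fun r => (r, √(u n) * s)) ⁻¹' S n) = 0 := by
          rw [← nonpos_iff_eq_zero, ← measure_empty (μ := ν)]
          apply measure_mono_ae
          filter_upwards [hνpos, hνle] with r hr hr1 hrS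
          exfalso
          have h1 : 1 + u n * x < r * Real.cos (√(u n) * s) := hrS.1
          have h2 : Real.cos (√(u n) * s) ≤ 1 - 2 / π ^ 2 * (√(u n) * s) ^ 2 :=
            Real.cos_le_one_sub_mul_cos_sq (abs_le.2 ⟨hs.1.le, hs.2.le⟩)
          have h3 : 0 < Real.cos (√(u n) * s) := by
            by_contra! h
            nlinarith
          have h4 : 2 / π ^ 2 * (√(u n) * s) ^ 2 < u n * -x := by nlinarith
          rw [mul_pow, Real.sq_sqrt hun.le] at h4
          have h5 : 2 / π ^ 2 * s ^ 2 < -x := by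
            by_contra! h
            nlinarith
          have h6 : 2 * (s / π) ^ 2 < -x := by
            rw [div_pow]; convert h5 using 1; ring
          apply hK
          have e : s = π * (s / π) := by field_simp
          have h7 : |s / π| ≤ -x + 1 := by
            apply abs_le_of_sq_le_sq _ (by linarith)
            nlinarith
          rw [abs_le] at h7
          rw [e]
          constructor <;> nlinarith [pi_pos]
        rw [this]; rfl
      rw [h0, zero_div]
  · rw [integrable_indicator_iff measurableSet_Icc]
    exact integrableOn_const (by simp)
  · refine Eventually.of_forall fun s => ?_
    have hcc := cos_aux u hupos hu0 s
    have hDD := D_aux u hupos hu0 ρ hρ lam hlam hHR s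
    have hq := (q_aux u hupos hu0 _ _ x hcc).min (q_aux u hupos hu0 _ _ y hDD)
    refine (hratio _ _ hq).congr' ?_
    have hθ : Tendsto (fun n => √(u n) * s) atTop (𝓝 0) := by
      simpa using hu0.sqrt.mul_const s
    filter_upwards [(to_one_aux u hupos hu0 _ _ hcc).eventually (lt_mem_nhds (show (0:ℝ) < 1 by norm_num)),
      (to_one_aux u hupos hu0 _ _ hDD).eventually (lt_mem_nhds (show (0:ℝ) < 1 by norm_num)),
      hθ.eventually (Ioo_mem_nhds (neg_lt_zero.2 pi_pos) pi_pos)] with n hn1 hn2 hn3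
    congr 1
    simp only [hg]
    rw [indicator_of_mem (show √(u n) * s ∈ Ioo (-π) π from hn3), hGν]
    congr 1
    have hun := hupos n
    apply measure_congr
    filter_upwards [hνpos] with r hr
    apply propext
    show (1 - u n * _ < r) ↔ (_ ∧ _)
    rw [mul_min_of_nonneg _ _ hun.le, mul_div_cancel₀ _ hun.ne', mul_div_cancel₀ _ hun.ne']
    have habs : |r * Real.cos (√(u n) * s)| = r * Real.cos (√(u n) * s) :=
      abs_of_pos (mul_pos hr hn1)
    simp only [habs]
    rw [sub_lt_comm, lt_min_iff, sub_lt_sub_iff_left, sub_lt_sub_iff_left, div_lt_iff₀ hn1,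
      div_lt_iff₀ hn2]
    have e : r * (ρ n * Real.cos (√(u n) * s) + √(1 - ρ n ^ 2) * Real.sin (√(u n) * s))
      = ρ n * (r * Real.cos (√(u n) * s)) + √(1 - ρ n ^ 2) * (r * Real.sin (√(u n) * s)) := by ring
    rw [e]
end

section
/- For all x < 0 and y < 0, lim_{n→∞} [P(ρ_{1n}|X| + √(1-ρ_{1n}²)·Y ≤ 1 + u_n·x, ρ_{2n}|X| + √(1-ρ_{2n}²)·Y ≤ 1 + u_n·y)]^n = exp(-2·I_α·(|x|^{1/2+α}·Υ_α((λ + (y-x)/(2λ))/√(2|x|)) + |y|^{1/2+α}·Υ_α((λ + (x-y)/(2λ))/√(2|y|)))) with λ = |λ₁ - λ₂|. -/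
open MeasureTheory Filter Real Set ProbabilityTheory Topology

lemma beta_real (a : ℝ) (ha : 0 < a) :
    ∫ t in (0:ℝ)..1, t ^ a * (1 - t) ^ a = Gamma (a + 1) ^ 2 / Gamma (2 * a + 2) := by
  have h := Complex.Gamma_mul_Gamma_eq_betaIntegral (s := ((a + 1 : ℝ) : ℂ)) (t := ((a + 1 : ℝ) : ℂ))
    (by rw [Complex.ofReal_re]; linarith) (by rw [Complex.ofReal_re]; linarith)
  have hb : Complex.betaIntegral ((a + 1 : ℝ) : ℂ) ((a + 1 : ℝ) : ℂ)
      = ((∫ t in (0:ℝ)..1, t ^ a * (1 - t) ^ a : ℝ) : ℂ) := by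
    rw [Complex.betaIntegral, ← intervalIntegral.integral_ofReal]
    apply intervalIntegral.integral_congr
    intro t ht
    rw [uIcc_of_le zero_le_one] at ht
    simp only [Complex.ofReal_add, Complex.ofReal_one, add_sub_cancel_right]
    rw [Complex.ofReal_mul, Complex.ofReal_cpow ht.1, Complex.ofReal_cpow (by linarith [ht.2])]
    push_cast
    rfl
  rw [hb, ← Complex.ofReal_add, Complex.Gamma_ofReal, Complex.Gamma_ofReal] at h
  have h2 : Gamma (a+1) * Gamma (a+1) = Gamma (a + 1 + (a+1)) * ∫ t in (0:ℝ)..1, t ^ a * (1 - t) ^ a := by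
    exact_mod_cast h
  have hp : 0 < Gamma (2 * a + 2) := Gamma_pos_of_pos (by linarith)
  rw [eq_div_iff hp.ne', sq, h2]
  ring_nf

lemma beta_sym (a : ℝ) (ha : 0 < a) :
    ∫ s in Set.Icc (-1 : ℝ) 1, (1 - s ^ 2) ^ a = √π * Gamma (a + 1) / Gamma (a + 3 / 2) := by
  rw [integral_Icc_eq_integral_Ioc, ← intervalIntegral.integral_of_le (by norm_num)]
  have h1 := intervalIntegral.integral_comp_mul_sub (a := 0) (b := 1) (c := 2)
    (fun s : ℝ => (1 - s ^ 2) ^ a) (by norm_num) 1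
  norm_num at h1
  have h2 : ∫ x in (0:ℝ)..1, (1 - (2 * x - 1) ^ 2) ^ a = 4 ^ a * ∫ t in (0:ℝ)..1, t ^ a * (1 - t) ^ a := by
    rw [← intervalIntegral.integral_const_mul]
    apply intervalIntegral.integral_congr
    intro t ht
    rw [uIcc_of_le zero_le_one] at ht
    have h3 : 1 - (2 * t - 1) ^ 2 = 4 * (t * (1 - t)) := by ring
    have h4 : 0 ≤ 1 - t := by linarith [ht.2]
    simp only []
    rw [h3, mul_rpow (by norm_num) (mul_nonneg ht.1 h4), mul_rpow ht.1 h4]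
  rw [h2, beta_real a ha] at h1
  have h5 := Gamma_mul_Gamma_add_half (a + 1)
  have hp : 0 < Gamma (2 * a + 2) := Gamma_pos_of_pos (by linarith)
  have hq : 0 < Gamma (a + 3 / 2) := Gamma_pos_of_pos (by linarith)
  have e1 : a + 1 + 1 / 2 = a + 3 / 2 := by ring
  have e2 : 2 * (a + 1) = 2 * a + 2 := by ring
  rw [e1, e2] at h5
  have h6 : (4:ℝ) ^ a * 2 ^ (1 - (2 * a + 2)) = 1 / 2 := by
    rw [show (4:ℝ) = 2 ^ (2:ℝ) by norm_num, ← rpow_mul (by norm_num), ← rpow_add (by norm_num)]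
    rw [show 2 * a + (1 - (2 * a + 2)) = -1 by ring, rpow_neg_one]; norm_num
  rw [show ∫ x in (-1:ℝ)..1, (1 - x ^ 2) ^ a = 2 * (4 ^ a * (Gamma (a + 1) ^ 2 / Gamma (2 * a + 2))) by
    linarith]
  rw [eq_div_iff hq.ne']
  rw [show 2 * (4 ^ a * (Gamma (a + 1) ^ 2 / Gamma (2 * a + 2))) * Gamma (a + 3 / 2)
    = 2 * 4 ^ a * (Gamma (a + 1) / Gamma (2 * a + 2)) * (Gamma (a+1) * Gamma (a + 3 / 2)) by ring, h5]
  rw [show 2 * 4 ^ a * (Gamma (a + 1) / Gamma (2 * a + 2)) * (Gamma (2 * a + 2) * 2 ^ (1 - (2 * a + 2)) * √π) = 2 * (4 ^ a * 2 ^ (1 - (2 * a + 2))) * √π * Gamma (a+1) * (Gamma (2 * a + 2) / Gamma (2 * a + 2)) by ring, h6, div_self hp.ne']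
  ring

lemma K_int (a : ℝ) (ha : 0 < a) (p T : ℝ) (hp : 0 < p) :
    ∫ s in Set.Iic T, (max (p - s ^ 2 / 2) 0) ^ a
      = √2 * p ^ (1 / 2 + a) * ∫ s in Set.Icc (-1 : ℝ) (min (T / √(2 * p)) 1), (1 - s ^ 2) ^ a := by
  set c := √(2 * p) with hc
  have hc0 : 0 < c := by positivity
  have hc2 : c ^ 2 = 2 * p := by rw [hc, sq_sqrt (by positivity)]
  have h1 := Measure.integral_comp_mul_left
    ((Set.Iic T).indicator (fun s => (max (p - s ^ 2 / 2) 0) ^ a)) c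
  rw [integral_indicator measurableSet_Iic, abs_of_pos (by positivity), smul_eq_mul,
    eq_comm, inv_mul_eq_iff_eq_mul₀ hc0.ne'] at h1
  rw [h1, ← integral_indicator measurableSet_Icc]
  have h2 : ∀ x, (Set.Iic T).indicator (fun s => (max (p - s ^ 2 / 2) 0) ^ a) (c * x)
     = p ^ a * (Set.Icc (-1 : ℝ) (min (T / c) 1)).indicator (fun s => (1 - s ^ 2) ^ a) x := by
    intro x
    have e1 : p - (c * x) ^ 2 / 2 = p * (1 - x ^ 2) := by rw [mul_pow, hc2]; ring
    by_cases hx : x ≤ T / c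
    · rw [indicator_of_mem (by rw [mem_Iic]; rwa [le_div_iff₀' hc0] at hx), e1]
      by_cases hx2 : |x| ≤ 1
      · have hx3 := abs_le.1 hx2
        rw [indicator_of_mem (by exact ⟨hx3.1, le_min hx hx3.2⟩)]
        have : 0 ≤ 1 - x ^ 2 := by nlinarith
        rw [max_eq_left (by positivity), mul_rpow hp.le this]
      · rw [indicator_of_notMem (by intro h; exact hx2 (abs_le.2 ⟨h.1, h.2.trans (min_le_right _ _)⟩))]
        have : 1 - x ^ 2 ≤ 0 := by
          have := (not_le.1 hx2).le
          have := (one_le_sq_iff_one_le_abs x).2 this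
          linarith
        rw [max_eq_right (by nlinarith), zero_rpow ha.ne', mul_zero]
    · rw [indicator_of_notMem (by rw [mem_Iic]; rwa [le_div_iff₀' hc0] at hx),
        indicator_of_notMem (by intro h; exact hx (h.2.trans (min_le_left _ _))), mul_zero]
  simp_rw [h2]
  rw [integral_const_mul, ← mul_assoc]
  congr 1
  rw [hc, sqrt_mul (by norm_num), rpow_add hp, ← sqrt_eq_rpow]
  ring

lemma lim_int_aux (a : ℝ) (ha : 0 < a) (p q l₁ l₂ : ℝ) (hp : 0 < p) (hq : 0 < q) (hl : l₁ < l₂) :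
    ∫ s, (max (max (p - (s - 2 * l₁) ^ 2 / 2) (q - (s - 2 * l₂) ^ 2 / 2)) 0) ^ a
      = π * (2 * Ialpha a * (p ^ (1 / 2 + a) * Upsilon a ((l₂ - l₁ + (p - q) / (2 * (l₂ - l₁))) / √(2 * p))
        + q ^ (1 / 2 + a) * Upsilon a ((l₂ - l₁ + (q - p) / (2 * (l₂ - l₁))) / √(2 * q)))) := by
  set d := l₂ - l₁ with hd
  have hd0 : 0 < d := by linarith
  have h1 := integral_sub_right_eq_self (μ := volume)
    (fun s => (max (max (p - s ^ 2 / 2) (q - (2 * d - s) ^ 2 / 2)) 0) ^ a) (2 * l₁)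
  have e1 : ∀ s, (2 * d - (s - 2 * l₁)) ^ 2 = (s - 2 * l₂) ^ 2 := by intro s; rw [hd]; ring
  simp_rw [e1] at h1
  rw [h1]
  set T := d + (p - q) / (2 * d) with hT
  have hint : ∀ p : ℝ, Integrable (fun s : ℝ => (max (p - s ^ 2 / 2) 0) ^ a) := by
    intro p
    apply Continuous.integrable_of_hasCompactSupport
    · exact Continuous.rpow_const (by fun_prop) (fun _ => Or.inr ha.le)
    · apply HasCompactSupport.of_support_subset_isCompact (isCompact_Icc (a := -(1 + 2*|p|)) (b := 1 + 2*|p|))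
      intro s hs
      rw [mem_Icc, ← abs_le]
      by_contra hcon
      push Not at hcon
      apply hs
      have : (1 + 2 * |p|) ^ 2 ≤ s ^ 2 := by rw [← sq_abs s]; gcongr
      have h3 : p - s ^ 2 / 2 ≤ 0 := by nlinarith [abs_nonneg p, le_abs_self p]
      simp only []
      rw [max_eq_right h3, zero_rpow ha.ne']
  have hTd : 2 * d * T = 2 * d ^ 2 + (p - q) := by rw [hT]; field_simp
  have hA : ∀ s ∈ Iic T, (max (max (p - s ^ 2 / 2) (q - (2 * d - s) ^ 2 / 2)) 0) ^ a = (max (p - s ^ 2 / 2) 0) ^ a := by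
    intro s hs
    rw [mem_Iic] at hs
    rw [max_eq_left (a := p - s ^ 2 / 2)]
    nlinarith
  have hB : ∀ s ∈ Ioi T, (max (max (p - s ^ 2 / 2) (q - (2 * d - s) ^ 2 / 2)) 0) ^ a = (max (q - (2 * d - s) ^ 2 / 2) 0) ^ a := by
    intro s hs
    rw [mem_Ioi] at hs
    rw [max_eq_right (a := p - s ^ 2 / 2)]
    nlinarith
  have hint2 : Integrable (fun s : ℝ => (max (q - (2 * d - s) ^ 2 / 2) 0) ^ a) :=
    (hint q).comp_sub_left (2 * d)
  have hfull : Integrable (fun s => (max (max (p - s ^ 2 / 2) (q - (2 * d - s) ^ 2 / 2)) 0) ^ a) := by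
    rw [← integrableOn_univ, ← Iic_union_Ioi (a := T)]
    apply IntegrableOn.union
    · exact ((hint p).integrableOn).congr_fun (fun s hs => (hA s hs).symm) measurableSet_Iic
    · exact (hint2.integrableOn).congr_fun (fun s hs => (hB s hs).symm) measurableSet_Ioi
  rw [← intervalIntegral.integral_Iic_add_Ioi (b := T) hfull.integrableOn hfull.integrableOn,
    setIntegral_congr_fun measurableSet_Iic hA, setIntegral_congr_fun measurableSet_Ioi hB,
    K_int a ha p T hp]
  have h5 : ∫ s in Ioi T, (max (q - (2 * d - s) ^ 2 / 2) 0) ^ a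
      = ∫ s in Iic (2 * d - T), (max (q - s ^ 2 / 2) 0) ^ a := by
    rw [integral_Iic_eq_integral_Iio, ← integral_indicator measurableSet_Ioi, ← integral_indicator measurableSet_Iio,
      ← integral_sub_left_eq_self _ volume (2 * d)]
    congr 1
    ext s
    by_cases hs : T < 2 * d - s
    · rw [indicator_of_mem (by exact hs), indicator_of_mem (by rw [mem_Iio]; linarith)]; ring_nf
    · rw [indicator_of_notMem (by exact hs), indicator_of_notMem (by rw [mem_Iio]; intro h; exact hs (by linarith))]
  have e2 : 2 * d - T = d + (q - p) / (2 * d) := by rw [hT]; ring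
  rw [h5, K_int a ha q _ hq, e2]
  unfold Upsilon
  have hB := beta_sym a ha
  have hG1 : 0 < Gamma (a + 1) := Gamma_pos_of_pos (by linarith)
  have hG2 : 0 < Gamma (a + 3 / 2) := Gamma_pos_of_pos (by linarith)
  have hpi : √π * √π = π := mul_self_sqrt pi_pos.le
  have h22 : √2 * √2 = (2:ℝ) := mul_self_sqrt (by norm_num)
  have key : √2 * ∫ s in Set.Icc (-1 : ℝ) 1, (1 - s ^ 2) ^ a = π * (2 * Ialpha a) := by
    rw [hB, Ialpha, sqrt_mul (by norm_num)]
    field_simp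
    rw [sq_sqrt pi_pos.le, sq √2, h22]
  have hB0 : ∫ s in Set.Icc (-1 : ℝ) 1, (1 - s ^ 2) ^ a ≠ 0 := by rw [hB]; positivity
  rw [← mul_assoc π, ← key]
  field_simp

lemma lim_int (a : ℝ) (ha : 0 < a) (x y l₁ l₂ : ℝ) (hx : x < 0) (hy : y < 0) (hl : 0 < |l₁ - l₂|) :
    ∫ s, (max (max (-x - (s - 2 * l₁) ^ 2 / 2) (-y - (s - 2 * l₂) ^ 2 / 2)) 0) ^ a
      = π * (2 * Ialpha a *
          (|x| ^ (1 / 2 + a) *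
              Upsilon a ((|l₁ - l₂| + (y - x) / (2 * |l₁ - l₂|)) / Real.sqrt (2 * |x|)) +
           |y| ^ (1 / 2 + a) *
              Upsilon a ((|l₁ - l₂| + (x - y) / (2 * |l₁ - l₂|)) /
                Real.sqrt (2 * |y|)))) := by
  rw [abs_of_neg hx, abs_of_neg hy]
  rcases lt_trichotomy l₁ l₂ with h | h | h
  · rw [abs_of_neg (by linarith : l₁ - l₂ < 0), lim_int_aux a ha _ _ _ _ (by linarith) (by linarith) h]
    ring_nf
  · simp [h] at hl
  · rw [abs_of_pos (by linarith : 0 < l₁ - l₂)]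
    simp_rw [max_comm (-x - _) (-y - _)]
    rw [lim_int_aux a ha _ _ _ _ (by linarith) (by linarith) h]
    ring_nf

lemma sin_half_eq (z : ℝ) : sin (z / 2) = sinc (z / 2) * (z / 2) := by
  by_cases h : z / 2 = 0
  · rw [h]; simp
  · rw [sinc_of_ne_zero h, div_mul_cancel₀ _ h]

lemma one_sub_cos_eq (z : ℝ) : 1 - cos z = 2 * sin (z / 2) ^ 2 := by
  have := cos_two_mul (z / 2)
  rw [show 2 * (z / 2) = z by ring] at this
  rw [this, cos_sq']; ring

lemma sinc_tendsto {z : ℕ → ℝ} (hz : Tendsto z atTop (𝓝 0)) :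
    Tendsto (fun n => sinc (z n / 2)) atTop (𝓝 1) := by
  have h := (continuous_sinc.tendsto 0).comp (f := fun n => z n / 2) (x := atTop)
    (by simpa using hz.div_const 2)
  simpa [Function.comp_def] using h

lemma phi_lim (u ρ : ℕ → ℝ) (hupos : ∀ n, 0 < u n) (hu0 : Tendsto u atTop (𝓝 0))
    (hρ : ∀ n, ρ n ∈ Ioc (0 : ℝ) 1) (l : ℝ) (hl : 0 ≤ l)
    (h : Tendsto (fun n : ℕ => (1 - ρ n) / u n) atTop (𝓝 (2 * l ^ 2))) :
    Tendsto (fun n => arccos (ρ n) / √(u n)) atTop (𝓝 (2 * l)) := by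
  have h1 : Tendsto ρ atTop (𝓝 1) := by
    have := (h.mul hu0).const_sub 1
    simp only [mul_zero, sub_zero] at this
    refine this.congr (fun n => ?_)
    rw [div_mul_cancel₀ _ (hupos n).ne']; ring
  have h2 : Tendsto (fun n => arccos (ρ n)) atTop (𝓝 0) := by
    have := (continuous_arccos.tendsto 1).comp h1
    simpa [Function.comp_def] using this
  have h3 := sinc_tendsto h2
  have h4 : Tendsto (fun n => sin (arccos (ρ n) / 2) / √(u n)) atTop (𝓝 l) := by
    have := (h.div_const 2).sqrt
    rw [show 2 * l ^ 2 / 2 = l ^ 2 by ring, sqrt_sq hl] at this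
    refine this.congr (fun n => ?_)
    have hc : cos (arccos (ρ n)) = ρ n := cos_arccos (by linarith [(hρ n).1]) (hρ n).2
    have h5 := one_sub_cos_eq (arccos (ρ n))
    rw [hc] at h5
    have h6 : 0 ≤ sin (arccos (ρ n) / 2) :=
      sin_nonneg_of_nonneg_of_le_pi (by linarith [arccos_nonneg (ρ n)]) (by linarith [arccos_le_pi (ρ n), arccos_nonneg (ρ n)])
    rw [h5, show 2 * sin (arccos (ρ n) / 2) ^ 2 / u n / 2 = sin (arccos (ρ n) / 2) ^ 2 / u n by ring,
      sqrt_div (sq_nonneg _), sqrt_sq h6]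
  have h5 := (h4.const_mul 2).div h3 one_ne_zero
  rw [div_one] at h5
  refine h5.congr' ?_
  filter_upwards [h3.eventually_ne one_ne_zero] with n hn
  simp only [Pi.div_apply]
  rw [sin_half_eq]
  field_simp

lemma z_lim (u z : ℕ → ℝ) (hupos : ∀ n, 0 < u n) (hu0 : Tendsto u atTop (𝓝 0)) (c : ℝ)
    (h : Tendsto (fun n => z n / √(u n)) atTop (𝓝 c)) : Tendsto z atTop (𝓝 0) := by
  have h1 := h.mul hu0.sqrt
  simp only [sqrt_zero, mul_zero] at h1
  refine h1.congr (fun n => ?_)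
  rw [div_mul_cancel₀ _ (sqrt_pos.2 (hupos n)).ne']

lemma cos_lim {z : ℕ → ℝ} (hz : Tendsto z atTop (𝓝 0)) : Tendsto (fun n => cos (z n)) atTop (𝓝 1) := by
  simpa [Function.comp_def] using (continuous_cos.tendsto 0).comp hz

lemma w_lim (u z : ℕ → ℝ) (hupos : ∀ n, 0 < u n) (hu0 : Tendsto u atTop (𝓝 0)) (c x : ℝ)
    (h : Tendsto (fun n => z n / √(u n)) atTop (𝓝 c)) :
    Tendsto (fun n => (1 - (1 + u n * x) / cos (z n)) / u n) atTop (𝓝 (-x - c ^ 2 / 2)) := by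
  have hz := z_lim u z hupos hu0 c h
  have h1 := cos_lim hz
  have h2 := ((((((sinc_tendsto hz).mul (h.div_const 2)).pow 2).const_mul (-2)).sub_const x).div h1 one_ne_zero)
  rw [show (-2 * (1 * (c / 2)) ^ 2 - x) / 1 = -x - c ^ 2 / 2 by ring] at h2
  refine h2.congr' ?_
  filter_upwards [h1.eventually_ne one_ne_zero] with n hn
  have h4 := one_sub_cos_eq (z n)
  rw [sin_half_eq] at h4
  have h5 : √(u n) ^ 2 = u n := sq_sqrt (hupos n).le
  have := (hupos n).ne'
  have h7 : (sinc (z n / 2) * (z n / √(u n) / 2)) ^ 2 = (1 - cos (z n)) / 2 / u n := by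
    rw [h4, mul_pow, div_pow, div_pow, h5]; ring
  simp only [Pi.div_apply]
  rw [h7]
  field_simp
  ring

lemma W_lim (f : ℕ → ℝ → ℝ) (W : ℝ → ℝ) (hW : Continuous W) (hf : ∀ n, Monotone (f n))
    (h : ∀ w, Tendsto (fun n => f n w) atTop (𝓝 (W w))) (w : ℕ → ℝ) (w0 : ℝ)
    (hw : Tendsto w atTop (𝓝 w0)) : Tendsto (fun n => f n (w n)) atTop (𝓝 (W w0)) := by
  rw [tendsto_order]
  constructor
  · intro a ha
    have h1 : ∀ᶠ v in 𝓝 w0, a < W v := (hW.tendsto w0).eventually_const_lt ha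
    obtain ⟨v, hv1, hv2⟩ := ((h1.filter_mono nhdsWithin_le_nhds).and (self_mem_nhdsWithin (a := w0) (s := Iio w0))).exists
    filter_upwards [(h v).eventually_const_lt hv1, hw.eventually_const_lt hv2] with n h1 h2
    exact h1.trans_le (hf n h2.le)
  · intro a ha
    have h1 : ∀ᶠ v in 𝓝 w0, W v < a := (hW.tendsto w0).eventually_lt_const ha
    obtain ⟨v, hv1, hv2⟩ := ((h1.filter_mono nhdsWithin_le_nhds).and (self_mem_nhdsWithin (a := w0) (s := Ioi w0))).exists
    filter_upwards [(h v).eventually_lt_const hv1, hw.eventually_lt_const hv2] with n h1 h2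
    exact (hf n h2.le).trans_lt h1

lemma fold_int (h : ℝ → ℝ) (hp : Function.Periodic h (2 * π)) (hs : ∀ t, h (π - t) = h t)
    (hi : ∀ a b, IntervalIntegrable h volume a b) :
    ∫ t in (-π)..π, h t = 2 * ∫ t in (-(π/2))..(π/2), h t := by
  have h1 := hp.intervalIntegral_add_eq (-π) (-(π/2))
  rw [show -π + 2 * π = π by ring, show -(π/2) + 2 * π = 3 * π / 2 by ring] at h1
  rw [h1, ← intervalIntegral.integral_add_adjacent_intervals (hi _ (π/2)) (hi _ _)]
  have h2 := intervalIntegral.integral_comp_sub_left (a := -(π/2)) (b := π/2) h π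
  simp_rw [hs] at h2
  rw [h2, show π - π/2 = π/2 by ring, show π - -(π/2) = 3 * π / 2 by ring]
  ring

lemma prob_eq {Ω : Type*} [MeasurableSpace Ω] (μ : Measure Ω) [IsProbabilityMeasure μ]
    (R Θ : Ω → ℝ) (hRm : Measurable R) (hΘm : Measurable Θ)
    (hΘunif : μ.map Θ = (ENNReal.ofReal (2 * π))⁻¹ • volume.restrict (Ioo (-π) π))
    (hindep : IndepFun R Θ μ) (A₁ A₂ : ℝ → ℝ) (b₁ b₂ : ℝ) (hA₁ : Measurable A₁) (hA₂ : Measurable A₂)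
    (hp₁ : Function.Periodic A₁ (2 * π)) (hp₂ : Function.Periodic A₂ (2 * π))
    (hs₁ : ∀ t, A₁ (π - t) = A₁ t) (hs₂ : ∀ t, A₂ (π - t) = A₂ t) :
    Measurable (fun t => μ.real {ω | b₁ < R ω * A₁ t ∨ b₂ < R ω * A₂ t}) ∧
    μ.real {ω | b₁ < R ω * A₁ (Θ ω) ∨ b₂ < R ω * A₂ (Θ ω)} =
      π⁻¹ * ∫ t in (-(π/2))..(π/2), μ.real {ω | b₁ < R ω * A₁ t ∨ b₂ < R ω * A₂ t} := by
  let S : Set (ℝ × ℝ) := {p | b₁ < p.1 * A₁ p.2 ∨ b₂ < p.1 * A₂ p.2}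
  have hS : MeasurableSet S := by
    apply MeasurableSet.union
    · exact measurableSet_lt measurable_const (measurable_fst.mul (hA₁.comp measurable_snd))
    · exact measurableSet_lt measurable_const (measurable_fst.mul (hA₂.comp measurable_snd))
  have hsec : ∀ t, μ.map R ((fun x => (x, t)) ⁻¹' S) = μ {ω | b₁ < R ω * A₁ t ∨ b₂ < R ω * A₂ t} := by
    intro t
    rw [Measure.map_apply hRm (measurable_prodMk_right hS)]
    rfl
  have : IsProbabilityMeasure (μ.map R) := Measure.isProbabilityMeasure_map hRm.aemeasurable
  have hme : Measurable (fun t => μ {ω | b₁ < R ω * A₁ t ∨ b₂ < R ω * A₂ t}) := by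
    have := measurable_measure_prodMk_right (μ := μ.map R) hS
    simp_rw [hsec] at this
    exact this
  have hm : Measurable (fun t => μ.real {ω | b₁ < R ω * A₁ t ∨ b₂ < R ω * A₂ t}) := hme.ennreal_toReal
  refine ⟨hm, ?_⟩
  have h1 : μ {ω | b₁ < R ω * A₁ (Θ ω) ∨ b₂ < R ω * A₂ (Θ ω)} = μ.map (fun ω => (R ω, Θ ω)) S := by
    rw [Measure.map_apply (hRm.prodMk hΘm) hS]; rfl
  have : IsProbabilityMeasure (μ.map Θ) := Measure.isProbabilityMeasure_map hΘm.aemeasurable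
  rw [(indepFun_iff_map_prod_eq_prod_map_map hRm.aemeasurable hΘm.aemeasurable).1 hindep,
    Measure.prod_apply_symm hS] at h1
  simp_rw [hsec] at h1
  rw [measureReal_def, h1, hΘunif, lintegral_smul_measure, smul_eq_mul, ENNReal.toReal_mul,
    ENNReal.toReal_inv, ENNReal.toReal_ofReal (by positivity),
    ← integral_toReal hme.aemeasurable (Eventually.of_forall fun t => measure_lt_top _ _),
    ← integral_Ioc_eq_integral_Ioo, ← intervalIntegral.integral_of_le (by linarith [pi_pos])]
  have := fold_int (fun t => μ.real {ω | b₁ < R ω * A₁ t ∨ b₂ < R ω * A₂ t})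
    (fun t => by beta_reduce; rw [hp₁ t, hp₂ t]) (fun t => by rw [hs₁ t, hs₂ t])
    (fun a b => by
      apply (intervalIntegrable_const (c := (1:ℝ))).mono_fun hm.aestronglyMeasurable
      refine Eventually.of_forall (fun t => ?_)
      show ‖μ.real _‖ ≤ ‖(1:ℝ)‖
      rw [norm_one, norm_of_nonneg measureReal_nonneg]
      exact measureReal_le_one)
  simp only [measureReal_def] at this ⊢
  rw [this]
  field_simp

lemma A_eq (φ t : ℝ) (h1 : -(π/2) < t) (h2 : t ≤ π/2) :
    cos φ * |cos t| + sin φ * sin t = cos (t - φ) := by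
  rw [abs_of_nonneg (cos_nonneg_of_neg_pi_div_two_le_of_le h1.le h2), cos_sub]; ring

lemma supp_bound (v s x φ c m : ℝ) (hv : 0 < v) (hφ0 : 0 ≤ φ) (hφ : φ ≤ π / 2)
    (h1 : -(π/2) < √v * s) (h2 : √v * s ≤ π/2) (hc : φ / √v ≤ c) (hm : -x ≤ m)
    (h : 1 + v * x < cos (√v * s - φ)) : |s| ≤ (1 + m * π ^ 2 / 2) + c := by
  have hsv : 0 < √v := sqrt_pos.2 hv
  have h3 := cos_le_one_sub_mul_cos_sq (x := √v * s - φ)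
    (abs_le.2 ⟨by linarith, by linarith⟩)
  have h4 : √v * s - φ = √v * (s - φ / √v) := by field_simp
  rw [h4, mul_pow, sq_sqrt hv.le] at h3
  rw [h4] at h
  have h5 : v * (2 / π ^ 2 * (s - φ / √v) ^ 2) < v * m := by nlinarith
  have h6 := lt_of_mul_lt_mul_left h5 hv.le
  have h7 : (s - φ / √v) ^ 2 < m * π ^ 2 / 2 := by
    have hpi : 0 < π ^ 2 := by positivity
    have : (s - φ / √v) ^ 2 = (2 / π ^ 2 * (s - φ / √v) ^ 2) * (π ^ 2 / 2) := by field_simp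
    rw [this]
    nlinarith
  have h8 : |s - φ / √v| ≤ 1 + m * π ^ 2 / 2 := by
    have := sq_abs (s - φ / √v)
    nlinarith [abs_nonneg (s - φ / √v), sq_nonneg (|s - φ / √v| - 1)]
  have h9 : 0 ≤ φ / √v := by positivity
  have h10 := abs_add_le (s - φ / √v) (φ / √v)
  rw [sub_add_cancel, abs_of_nonneg h9] at h10
  linarith

lemma core {Ω : Type*} [MeasurableSpace Ω] (μ : Measure Ω) [IsProbabilityMeasure μ]
    (R : Ω → ℝ) (hRpos : ∀ᵐ ω ∂μ, 0 < R ω) (hRle : ∀ᵐ ω ∂μ, R ω ≤ 1)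
    (α : ℝ) (hα : 0 < α) (u : ℕ → ℝ) (hupos : ∀ n, 0 < u n) (hu0 : Tendsto u atTop (𝓝 0))
    (hGpos : ∀ t < 1, 0 < μ.real {ω | t < R ω})
    (hW : ∀ w, Tendsto (fun n => μ.real {ω | 1 - u n * w < R ω} / μ.real {ω | 1 - u n < R ω})
      atTop (𝓝 ((max w 0) ^ α)))
    (φ₁ φ₂ : ℕ → ℝ) (hφ₁ : ∀ n, 0 ≤ φ₁ n ∧ φ₁ n ≤ π / 2) (hφ₂ : ∀ n, 0 ≤ φ₂ n ∧ φ₂ n ≤ π / 2)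
    (l₁ l₂ : ℝ) (hl₁ : Tendsto (fun n => φ₁ n / √(u n)) atTop (𝓝 (2 * l₁)))
    (hl₂ : Tendsto (fun n => φ₂ n / √(u n)) atTop (𝓝 (2 * l₂)))
    (x y : ℝ) (hx : x < 0) (hy : y < 0) (g : ℕ → ℝ → ℝ)
    (hg : ∀ n t, g n t = μ.real {ω | 1 + u n * x < R ω * (cos (φ₁ n) * |cos t| + sin (φ₁ n) * sin t) ∨
      1 + u n * y < R ω * (cos (φ₂ n) * |cos t| + sin (φ₂ n) * sin t)})
    (hgm : ∀ n, Measurable (g n)) :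
    Tendsto (fun n => (√(u n) * μ.real {ω | 1 - u n < R ω})⁻¹ * ∫ t in (-(π/2))..(π/2), g n t)
      atTop (𝓝 (∫ s, (max (max (-x - (s - 2 * l₁) ^ 2 / 2) (-y - (s - 2 * l₂) ^ 2 / 2)) 0) ^ α)) := by
  have hsu : ∀ n, 0 < √(u n) := fun n => sqrt_pos.2 (hupos n)
  have hG1 : ∀ n, 0 < μ.real {ω | 1 - u n < R ω} := fun n => hGpos _ (by linarith [hupos n])
  let J : Set ℝ := Ioc (-(π/2)) (π/2)
  have hstep : ∀ n, (√(u n) * μ.real {ω | 1 - u n < R ω})⁻¹ * ∫ t in (-(π/2))..(π/2), g n t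
      = ∫ s, J.indicator (g n) (√(u n) * s) / μ.real {ω | 1 - u n < R ω} := by
    intro n
    rw [integral_div, Measure.integral_comp_mul_left, integral_indicator measurableSet_Ioc,
      intervalIntegral.integral_of_le (by linarith [pi_pos]), abs_of_pos (by have := hsu n; positivity),
      smul_eq_mul, mul_inv]
    ring
  simp_rw [hstep]
  set m := max (-x) (-y) with hm
  have hm0 : 0 < m := lt_max_of_lt_left (by linarith)
  set c := max (2 * l₁ + 1) (2 * l₂ + 1) with hc
  set M := (1 + m * π ^ 2 / 2) + c with hM
  set C := (max m 0) ^ α + 1 with hC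
  refine tendsto_integral_filter_of_dominated_convergence
    ((Icc (-M) M).indicator (fun _ => C)) ?_ ?_ ?_ ?_
  · refine Eventually.of_forall (fun n => Measurable.aestronglyMeasurable ?_)
    exact (((hgm n).indicator measurableSet_Ioc).comp (measurable_const_mul _)).div_const _
  · have hum : Tendsto (fun n => u n * m) atTop (𝓝 0) := by simpa using hu0.mul_const m
    filter_upwards [hum.eventually_lt_const one_pos, (hW m).eventually_lt_const (lt_add_one _),
      hl₁.eventually_lt_const (lt_add_one _), hl₂.eventually_lt_const (lt_add_one _)] with n hn0 hn1 hn2 hn3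
    refine Eventually.of_forall (fun s => ?_)
    have hCn : 0 ≤ C := by positivity
    by_cases hs : √(u n) * s ∈ J
    swap
    · rw [indicator_of_notMem hs, zero_div, norm_zero]
      exact indicator_nonneg (fun _ _ => hCn) s
    rw [indicator_of_mem hs, hg]
    rw [A_eq _ _ hs.1 hs.2, A_eq _ _ hs.1 hs.2, norm_of_nonneg (div_nonneg measureReal_nonneg (hG1 n).le)]
    by_cases hsM : s ∈ Icc (-M) M
    · rw [indicator_of_mem hsM]
      refine le_trans ?_ hn1.le
      refine div_le_div_of_nonneg_right ?_ (hG1 n).le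
      simp only [measureReal_def]
      refine ENNReal.toReal_mono (measure_ne_top _ _) (measure_mono_ae ?_)
      filter_upwards [hRpos] with ω h0 h
      show 1 - u n * m < R ω
      have hu := hupos n
      have hmx : u n * (-x) ≤ u n * m := mul_le_mul_of_nonneg_left (le_max_left _ _) hu.le
      have hmy : u n * (-y) ≤ u n * m := mul_le_mul_of_nonneg_left (le_max_right _ _) hu.le
      rcases h with h | h
      · nlinarith [cos_le_one (√(u n) * s - φ₁ n)]
      · nlinarith [cos_le_one (√(u n) * s - φ₂ n)]
    · rw [indicator_of_notMem hsM]
      have : μ.real {ω | 1 + u n * x < R ω * cos (√(u n) * s - φ₁ n) ∨ 1 + u n * y < R ω * cos (√(u n) * s - φ₂ n)} = 0 := by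
        rw [measureReal_eq_zero_iff]
        rw [← nonpos_iff_eq_zero, ← measure_empty (μ := μ)]
        refine measure_mono_ae ?_
        filter_upwards [hRpos, hRle] with ω h0 h1 h
        exfalso
        apply hsM
        rw [mem_Icc, ← abs_le]
        have hcos1 : ∀ φ b, b < R ω * cos (√(u n) * s - φ) → 0 < b → b < cos (√(u n) * s - φ) := by
          intro φ b hb hb0
          have : 0 < cos (√(u n) * s - φ) := by
            by_contra hcon
            push Not at hcon
            nlinarith
          nlinarith
        have hu := hupos n
        have hmx : u n * (-x) ≤ u n * m := mul_le_mul_of_nonneg_left (le_max_left _ _) hu.le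
        have hmy : u n * (-y) ≤ u n * m := mul_le_mul_of_nonneg_left (le_max_right _ _) hu.le
        rcases h with h | h
        · exact supp_bound (u n) s x (φ₁ n) c m hu (hφ₁ n).1 (hφ₁ n).2 hs.1 hs.2
            (hn2.le.trans (le_max_left _ _)) (le_max_left _ _) (hcos1 _ _ h (by linarith))
        · exact supp_bound (u n) s y (φ₂ n) c m hu (hφ₂ n).1 (hφ₂ n).2 hs.1 hs.2
            (hn3.le.trans (le_max_right _ _)) (le_max_right _ _) (hcos1 _ _ h (by linarith))
      rw [this, zero_div]
  · exact (integrable_indicator_iff measurableSet_Icc).2 (by simp)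
  · refine Eventually.of_forall (fun s => ?_)
    have hsm : Tendsto (fun n => √(u n) * s) atTop (𝓝 0) := by
      simpa using hu0.sqrt.mul_const s
    have hz₁ : Tendsto (fun n => (√(u n) * s - φ₁ n) / √(u n)) atTop (𝓝 (s - 2 * l₁)) := by
      refine (hl₁.const_sub s).congr (fun n => ?_)
      have := hsu n
      field_simp
    have hz₂ : Tendsto (fun n => (√(u n) * s - φ₂ n) / √(u n)) atTop (𝓝 (s - 2 * l₂)) := by
      refine (hl₂.const_sub s).congr (fun n => ?_)
      have := hsu n
      field_simp
    have hw := (w_lim u _ hupos hu0 _ x hz₁).max (w_lim u _ hupos hu0 _ y hz₂)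
    have hcont : Continuous (fun w : ℝ => (max w 0) ^ α) :=
      Continuous.rpow_const (by fun_prop) (fun _ => Or.inr hα.le)
    have hlim := W_lim (fun n w => μ.real {ω | 1 - u n * w < R ω} / μ.real {ω | 1 - u n < R ω}) _ hcont
      (by
        intro n w w' hww
        refine div_le_div_of_nonneg_right ?_ (hG1 n).le
        refine measureReal_mono (fun ω hω => ?_)
        have := mul_le_mul_of_nonneg_left hww (hupos n).le
        simp only [mem_ofPred_eq] at hω ⊢
        linarith) hW _ _ hw
    refine hlim.congr' ?_
    have hc₁ := cos_lim (z_lim u _ hupos hu0 _ hz₁)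
    have hc₂ := cos_lim (z_lim u _ hupos hu0 _ hz₂)
    have hJ : ∀ᶠ n in atTop, √(u n) * s ∈ J :=
      hsm.eventually (Ioc_mem_nhds (by linarith [pi_pos]) (by linarith [pi_pos]))
    filter_upwards [hc₁.eventually_const_lt one_pos, hc₂.eventually_const_lt one_pos, hJ] with n h1 h2 h3
    rw [indicator_of_mem h3, hg]
    rw [A_eq _ _ h3.1 h3.2, A_eq _ _ h3.1 h3.2]
    congr 2
    ext ω
    simp only [mem_ofPred_eq]
    rw [mul_max_of_nonneg _ _ (hupos n).le, mul_div_cancel₀ _ (hupos n).ne', mul_div_cancel₀ _ (hupos n).ne',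
      ← div_lt_iff₀ h1, ← div_lt_iff₀ h2, sub_lt_comm, lt_max_iff]
    constructor
    · rintro (h | h)
      · left; linarith
      · right; linarith
    · rintro (h | h)
      · left; linarith
      · right; linarith

theorem maxima_skew_weibull_joint
{Ω : Type*} [MeasurableSpace Ω] (μ : Measure Ω) [IsProbabilityMeasure μ]
    (R Θ : Ω → ℝ) (hRm : Measurable R) (hΘm : Measurable Θ)
    (hRpos : ∀ᵐ ω ∂μ, 0 < R ω)
    (hΘunif : μ.map Θ = (ENNReal.ofReal (2 * π))⁻¹ • volume.restrict (Ioo (-π) π))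
    (hindep : IndepFun R Θ μ)
    (X Y : Ω → ℝ)
    (hX : X = fun ω => R ω * Real.cos (Θ ω))
    (hY : Y = fun ω => R ω * Real.sin (Θ ω))
    (F : ℝ → ℝ)
    (hF : F = fun x => (μ {ω | R ω ≤ x}).toReal)
    (hend1 : ∀ x < 1, F x < 1) (hend2 : ∀ x, 1 ≤ x → F x = 1)
    (α : ℝ) (hα : 0 < α)
    (hWeibull : ∀ x > 0, Tendsto (fun t => (1 - F (1 - t * x)) / (1 - F (1 - t)))
      (nhdsWithin 0 (Ioi 0)) (𝓝 (x ^ α)))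
    (u : ℕ → ℝ) (hupos : ∀ n, 0 < u n) (hudec : StrictAnti u)
    (hu0 : Tendsto u atTop (𝓝 0))
    (hun : Tendsto (fun n : ℕ => (n : ℝ) * Real.sqrt (u n) * (1 - F (1 - u n))) atTop (𝓝 1))
    (ρ₁ ρ₂ : ℕ → ℝ) (hρ₁ : ∀ n, ρ₁ n ∈ Ioc (0 : ℝ) 1) (hρ₂ : ∀ n, ρ₂ n ∈ Ioc (0 : ℝ) 1)
    (lam₁ lam₂ : ℝ) (hlam₁ : 0 ≤ lam₁) (hlam₂ : 0 ≤ lam₂)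
    (hHR₁ : Tendsto (fun n : ℕ => (1 - ρ₁ n) / u n) atTop (𝓝 (2 * lam₁ ^ 2)))
    (hHR₂ : Tendsto (fun n : ℕ => (1 - ρ₂ n) / u n) atTop (𝓝 (2 * lam₂ ^ 2)))
    (hne : 0 < |lam₁ - lam₂|) :
    ∀ x < (0 : ℝ), ∀ y < (0 : ℝ),
      Tendsto (fun n : ℕ =>
          ((μ {ω | ρ₁ n * |X ω| + Real.sqrt (1 - ρ₁ n ^ 2) * Y ω ≤ 1 + u n * x ∧
            ρ₂ n * |X ω| + Real.sqrt (1 - ρ₂ n ^ 2) * Y ω ≤ 1 + u n * y}).toReal) ^ n)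
        atTop (𝓝 (Real.exp (-(2 * Ialpha α *
          (|x| ^ (1 / 2 + α) *
              Upsilon α ((|lam₁ - lam₂| + (y - x) / (2 * |lam₁ - lam₂|)) / Real.sqrt (2 * |x|)) +
           |y| ^ (1 / 2 + α) *
              Upsilon α ((|lam₁ - lam₂| + (x - y) / (2 * |lam₁ - lam₂|)) /
                Real.sqrt (2 * |y|))))))) := by
  intro x hx y hy
  subst hX hY hF
  have hG : ∀ t, 1 - (μ {ω | R ω ≤ t}).toReal = μ.real {ω | t < R ω} := by
    intro t
    have h1 : MeasurableSet {ω | R ω ≤ t} := measurableSet_le hRm measurable_const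
    have h2 := probReal_compl_eq_one_sub (μ := μ) h1
    rw [← measureReal_def, ← h2]
    congr 1
    ext ω
    simp
  simp only [hG] at hWeibull hun
  have hGpos : ∀ t < 1, 0 < μ.real {ω | t < R ω} := by
    intro t ht
    have := hend1 t ht
    rw [← hG t]
    simp only [] at this
    linarith
  have hG0 : ∀ t, 1 ≤ t → μ.real {ω | t < R ω} = 0 := by
    intro t ht
    have := hend2 t ht
    rw [← hG t]
    simp only [] at this
    linarith
  have hRle : ∀ᵐ ω ∂μ, R ω ≤ 1 := by
    have := hG0 1 le_rfl
    rw [measureReal_eq_zero_iff] at this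
    rw [ae_iff]
    simpa using this
  have hW : ∀ w, Tendsto (fun n => μ.real {ω | 1 - u n * w < R ω} / μ.real {ω | 1 - u n < R ω})
      atTop (𝓝 ((max w 0) ^ α)) := by
    intro w
    rcases lt_or_ge 0 w with hw | hw
    · rw [max_eq_left hw.le]
      have hu' : Tendsto u atTop (nhdsWithin 0 (Ioi 0)) :=
        tendsto_nhdsWithin_iff.2 ⟨hu0, Eventually.of_forall hupos⟩
      exact (hWeibull w hw).comp hu'
    · rw [max_eq_right hw, zero_rpow hα.ne']
      refine tendsto_const_nhds.congr (fun n => ?_)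
      rw [hG0 _ (by nlinarith [hupos n]), zero_div]
  have hc₁ : ∀ n, cos (arccos (ρ₁ n)) = ρ₁ n := fun n => cos_arccos (by linarith [(hρ₁ n).1]) (hρ₁ n).2
  have hc₂ : ∀ n, cos (arccos (ρ₂ n)) = ρ₂ n := fun n => cos_arccos (by linarith [(hρ₂ n).1]) (hρ₂ n).2
  let A : ℝ → ℝ → ℝ := fun φ t => cos φ * |cos t| + sin φ * sin t
  have hAm : ∀ φ, Measurable (A φ) := fun φ => by
    have : Continuous (A φ) := by fun_prop
    exact this.measurable
  have hAp : ∀ φ, Function.Periodic (A φ) (2 * π) := fun φ t => by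
    simp only [A, cos_add_two_pi, sin_add_two_pi]
  have hAs : ∀ φ t, A φ (π - t) = A φ t := fun φ t => by
    simp only [A, cos_pi_sub, sin_pi_sub, abs_neg]
  have hprob := fun n => prob_eq μ R Θ hRm hΘm hΘunif hindep (A (arccos (ρ₁ n))) (A (arccos (ρ₂ n)))
    (1 + u n * x) (1 + u n * y) (hAm _) (hAm _) (hAp _) (hAp _) (hAs _) (hAs _)
  have hcore := core μ R hRpos hRle α hα u hupos hu0 hGpos hW (fun n => arccos (ρ₁ n)) (fun n => arccos (ρ₂ n))
    (fun n => ⟨arccos_nonneg _, arccos_le_pi_div_two.2 (hρ₁ n).1.le⟩)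
    (fun n => ⟨arccos_nonneg _, arccos_le_pi_div_two.2 (hρ₂ n).1.le⟩) lam₁ lam₂
    (phi_lim u ρ₁ hupos hu0 hρ₁ lam₁ hlam₁ hHR₁) (phi_lim u ρ₂ hupos hu0 hρ₂ lam₂ hlam₂ hHR₂)
    x y hx hy _ (fun n t => rfl) (fun n => (hprob n).1)
  rw [lim_int α hα x y lam₁ lam₂ hx hy hne] at hcore
  set L := 2 * Ialpha α *
          (|x| ^ (1 / 2 + α) *
              Upsilon α ((|lam₁ - lam₂| + (y - x) / (2 * |lam₁ - lam₂|)) / Real.sqrt (2 * |x|)) +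
           |y| ^ (1 / 2 + α) *
              Upsilon α ((|lam₁ - lam₂| + (x - y) / (2 * |lam₁ - lam₂|)) /
                Real.sqrt (2 * |y|))) with hL
  let q : ℕ → ℝ := fun n => μ.real {ω | 1 + u n * x < R ω * A (arccos (ρ₁ n)) (Θ ω) ∨
    1 + u n * y < R ω * A (arccos (ρ₂ n)) (Θ ω)}
  have hnq : Tendsto (fun n : ℕ => (n : ℝ) * -q n) atTop (𝓝 (-L)) := by
    have h1 := ((hun.mul hcore).const_mul π⁻¹).neg
    rw [one_mul, inv_mul_cancel_left₀ pi_ne_zero] at h1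
    refine h1.congr (fun n => ?_)
    have h2 : q n = _ := (hprob n).2
    rw [h2]
    have hgen : ∀ I G v m : ℝ, G ≠ 0 → v ≠ 0 → -(π⁻¹ * (m * v * G * ((v * G)⁻¹ * I))) = m * -(π⁻¹ * I) := by
      intro I G v m hG hv
      field_simp
    have h3 := hGpos (1 - u n) (by linarith [hupos n])
    have h4 := sqrt_pos.2 (hupos n)
    exact hgen _ _ _ _ h3.ne' h4.ne'
  refine (tendsto_one_add_pow_exp_of_tendsto hnq).congr (fun n => ?_)
  congr 1
  rw [← sub_eq_add_neg, ← measureReal_def]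
  have hqm : MeasurableSet {ω | 1 + u n * x < R ω * A (arccos (ρ₁ n)) (Θ ω) ∨
    1 + u n * y < R ω * A (arccos (ρ₂ n)) (Θ ω)} := by
    apply MeasurableSet.union
    · exact measurableSet_lt measurable_const (hRm.mul ((hAm _).comp hΘm))
    · exact measurableSet_lt measurable_const (hRm.mul ((hAm _).comp hΘm))
  rw [← probReal_compl_eq_one_sub hqm]
  simp only [measureReal_def]
  congr 1
  apply measure_congr
  filter_upwards [hRpos] with ω hω
  apply propext
  show ¬ (1 + u n * x < R ω * A (arccos (ρ₁ n)) (Θ ω) ∨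
    1 + u n * y < R ω * A (arccos (ρ₂ n)) (Θ ω)) ↔ (ρ₁ n * |R ω * cos (Θ ω)| + √(1 - ρ₁ n ^ 2) * (R ω * sin (Θ ω)) ≤ 1 + u n * x ∧
      ρ₂ n * |R ω * cos (Θ ω)| + √(1 - ρ₂ n ^ 2) * (R ω * sin (Θ ω)) ≤ 1 + u n * y)
  simp only [A, hc₁, hc₂, sin_arccos, abs_mul, abs_of_pos hω, not_or, not_lt]
  rw [show R ω * (ρ₁ n * |cos (Θ ω)| + √(1 - ρ₁ n ^ 2) * sin (Θ ω)) = ρ₁ n * (R ω * |cos (Θ ω)|) + √(1 - ρ₁ n ^ 2) * (R ω * sin (Θ ω)) by ring,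
    show R ω * (ρ₂ n * |cos (Θ ω)| + √(1 - ρ₂ n ^ 2) * sin (Θ ω)) = ρ₂ n * (R ω * |cos (Θ ω)|) + √(1 - ρ₂ n ^ 2) * (R ω * sin (Θ ω)) by ring]
end

section
/- For all x > 0 and y > 0, P(X > x, ρ|X| + √(1-ρ²)·Y > y) = P(R·cos Θ > x, Θ ∈ (β, π/2)) + P(R·cos(Θ - ψ) > y, Θ ∈ (-π/2 + ψ, β)), where ψ = arccos ρ and β = arctan((y/x - ρ)/√(1-ρ²)). -/
open MeasureTheory Filter Real Set ProbabilityTheory Topology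

theorem polar_decomposition_joint_tail
    {Ω : Type*} [MeasurableSpace Ω] (μ : Measure Ω) [IsProbabilityMeasure μ]
    (R Θ : Ω → ℝ) (hRm : Measurable R) (hΘm : Measurable Θ)
    (hRpos : ∀ᵐ ω ∂μ, 0 < R ω)
    (hΘunif : μ.map Θ = (ENNReal.ofReal (2 * π))⁻¹ • volume.restrict (Ioo (-π) π))
    (hindep : IndepFun R Θ μ)
    (X Y : Ω → ℝ)
    (hX : X = fun ω => R ω * Real.cos (Θ ω))
    (hY : Y = fun ω => R ω * Real.sin (Θ ω))
    (ρ : ℝ) (hρ : ρ ∈ Ioo (0 : ℝ) 1)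
    (x y : ℝ) (hx : 0 < x) (hy : 0 < y) :
    (μ {ω | x < X ω ∧ y < ρ * |X ω| + Real.sqrt (1 - ρ ^ 2) * Y ω}).toReal =
      (μ {ω | x < R ω * Real.cos (Θ ω) ∧
        Θ ω ∈ Ioo (Real.arctan ((y / x - ρ) / Real.sqrt (1 - ρ ^ 2))) (π / 2)}).toReal +
      (μ {ω | y < R ω * Real.cos (Θ ω - Real.arccos ρ) ∧
        Θ ω ∈ Ioo (-(π / 2) + Real.arccos ρ)
          (Real.arctan ((y / x - ρ) / Real.sqrt (1 - ρ ^ 2)))}).toReal := by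
  obtain ⟨hρ0, hρ1⟩ := hρ
  subst hX hY
  have hs : 0 < Real.sqrt (1 - ρ ^ 2) := Real.sqrt_pos.mpr (by nlinarith)
  have hcosψ : Real.cos (Real.arccos ρ) = ρ := Real.cos_arccos (by linarith) hρ1.le
  have hsinψ : Real.sin (Real.arccos ρ) = Real.sqrt (1 - ρ ^ 2) := Real.sin_arccos ρ
  have hψ0 : 0 < Real.arccos ρ := Real.arccos_pos.mpr hρ1
  have hψ1 : Real.arccos ρ < π / 2 := Real.arccos_lt_pi_div_two.mpr hρ0
  have hβ1 := Real.arctan_lt_pi_div_two ((y / x - ρ) / Real.sqrt (1 - ρ ^ 2))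
  set ψ := Real.arccos ρ with hψ
  set s := Real.sqrt (1 - ρ ^ 2) with hsdef
  have hgt : ∀ t : ℝ, -(π / 2) < t → t < π / 2 →
      (Real.arctan ((y / x - ρ) / s) < t ↔ y * Real.cos t < x * Real.cos (t - ψ)) := by
    intro t h1 h2
    have hc := Real.cos_pos_of_mem_Ioo ⟨h1, h2⟩
    conv_lhs => rw [← Real.arctan_tan h1 h2]
    rw [Real.arctan_strictMono.lt_iff_lt, div_lt_iff₀ hs, sub_lt_iff_lt_add, div_lt_iff₀ hx,
      Real.cos_sub, hcosψ, hsinψ, Real.tan_eq_sin_div_cos, ← mul_lt_mul_iff_left₀ hc]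
    have : (Real.sin t / Real.cos t * s + ρ) * x * Real.cos t
        = x * (Real.cos t * ρ + Real.sin t * s) := by field_simp; ring
    rw [this]
  have hlt : ∀ t : ℝ, -(π / 2) < t → t < π / 2 →
      (t < Real.arctan ((y / x - ρ) / s) ↔ x * Real.cos (t - ψ) < y * Real.cos t) := by
    intro t h1 h2
    have hc := Real.cos_pos_of_mem_Ioo ⟨h1, h2⟩
    conv_lhs => rw [← Real.arctan_tan h1 h2]
    rw [Real.arctan_strictMono.lt_iff_lt, lt_div_iff₀ hs, lt_sub_iff_add_lt, lt_div_iff₀ hx,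
      Real.cos_sub, hcosψ, hsinψ, Real.tan_eq_sin_div_cos, ← mul_lt_mul_iff_left₀ hc]
    have : (Real.sin t / Real.cos t * s + ρ) * x * Real.cos t
        = x * (Real.cos t * ρ + Real.sin t * s) := by field_simp; ring
    rw [this]
  set β := Real.arctan ((y / x - ρ) / s) with hβ
  have hΘmem : ∀ᵐ ω ∂μ, Θ ω ∈ Ioo (-π) π ∧ Θ ω ≠ β := by
    have h : ∀ᵐ t ∂(μ.map Θ), t ∈ Ioo (-π) π ∧ t ≠ β := by
      rw [hΘunif]
      apply Measure.ae_smul_measure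
      exact (ae_restrict_mem measurableSet_Ioo).and
        (ae_restrict_of_ae (Measure.ae_ne volume β))
    exact ae_of_ae_map hΘm.aemeasurable h
  have hBm : MeasurableSet {ω | y < R ω * Real.cos (Θ ω - ψ) ∧ Θ ω ∈ Ioo (-(π / 2) + ψ) β} := by
    apply MeasurableSet.inter
    · exact measurableSet_lt measurable_const
        (hRm.mul (Real.measurable_cos.comp (hΘm.sub_const ψ)))
    · exact hΘm measurableSet_Ioo
  rw [← ENNReal.toReal_add (measure_ne_top _ _) (measure_ne_top _ _), ← measure_union _ hBm]
  · congr 1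
    apply measure_congr
    filter_upwards [hRpos, hΘmem] with ω hR hΘ
    obtain ⟨⟨ht1, ht2⟩, hne⟩ := hΘ
    apply propext
    change (x < R ω * Real.cos (Θ ω) ∧
      y < ρ * |R ω * Real.cos (Θ ω)| + s * (R ω * Real.sin (Θ ω))) ↔
      ((x < R ω * Real.cos (Θ ω) ∧ Θ ω ∈ Ioo β (π / 2)) ∨
      (y < R ω * Real.cos (Θ ω - ψ) ∧ Θ ω ∈ Ioo (-(π / 2) + ψ) β))
    have hβ0 : -(π / 2) < β := Real.neg_pi_div_two_lt_arctan _
    generalize Θ ω = t at *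
    generalize R ω = r at *
    have hkey : x < r * Real.cos t →
        ρ * |r * Real.cos t| + s * (r * Real.sin t) = r * Real.cos (t - ψ) := by
      intro h
      rw [abs_of_pos (hx.trans h), Real.cos_sub, hcosψ, hsinψ]
      ring
    constructor
    · rintro ⟨h1, h2⟩
      rw [hkey h1] at h2
      have hc : 0 < Real.cos t := pos_of_mul_pos_right (hx.trans h1) hR.le
      have hd : 0 < Real.cos (t - ψ) := pos_of_mul_pos_right (hy.trans h2) hR.le
      have htu : t < π / 2 := by
        by_contra! h
        have := Real.cos_nonpos_of_pi_div_two_le_of_le h (by linarith)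
        linarith
      have htl : -(π / 2) < t := by
        by_contra! h
        have := Real.cos_nonpos_of_pi_div_two_le_of_le (x := -t) (by linarith) (by linarith)
        rw [Real.cos_neg] at this
        linarith
      have htψ : -(π / 2) + ψ < t := by
        by_contra! h
        have := Real.cos_nonpos_of_pi_div_two_le_of_le (x := -(t - ψ)) (by linarith) (by linarith)
        rw [Real.cos_neg] at this
        linarith
      rcases lt_or_gt_of_ne hne with h | h
      · exact Or.inr ⟨h2, htψ, h⟩
      · exact Or.inl ⟨h1, h, htu⟩
    · rintro (⟨h1, h2, h3⟩ | ⟨h1, h2, h3⟩)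
      · refine ⟨h1, ?_⟩
        rw [hkey h1]
        have h := (hgt t (by linarith) h3).1 h2
        have hc : 0 < Real.cos t := pos_of_mul_pos_right (hx.trans h1) hR.le
        have e1 := mul_lt_mul_of_pos_left h hR
        have e2 := mul_lt_mul_of_pos_left h1 hy
        have : x * y < x * (r * Real.cos (t - ψ)) := by linarith
        exact lt_of_mul_lt_mul_left this hx.le
      · have h := (hlt t (by linarith) (by linarith)).1 h3
        have e1 := mul_lt_mul_of_pos_left h hR
        have e2 := mul_lt_mul_of_pos_left h1 hx
        have : y * x < y * (r * Real.cos t) := by linarith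
        have h4 := lt_of_mul_lt_mul_left this hy.le
        exact ⟨h4, by rw [hkey h4]; exact h1⟩
  · rw [Set.disjoint_left]
    rintro ω ⟨_, h1, _⟩ ⟨_, _, h2⟩
    exact lt_asymm h1 h2
end

section
/- For every x > 0, P(ρ|X| + √(1-ρ²)·Y > x) = P(R·cos(Θ - ψ) > x, Θ - ψ ∈ (-π/2, π/2 - ψ)) + P(-R·cos(Θ + ψ) > x, Θ ∈ (π/2, π) ∪ (-π, -π/2 - ψ)), where ψ = arccos ρ. -/
open MeasureTheory Filter Real Set ProbabilityTheory Topology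

theorem polar_decomposition_skew_tail
    {Ω : Type*} [MeasurableSpace Ω] (μ : Measure Ω) [IsProbabilityMeasure μ]
    (R Θ : Ω → ℝ) (hRm : Measurable R) (hΘm : Measurable Θ)
    (hRpos : ∀ᵐ ω ∂μ, 0 < R ω)
    (hΘunif : μ.map Θ = (ENNReal.ofReal (2 * π))⁻¹ • volume.restrict (Ioo (-π) π))
    (hindep : IndepFun R Θ μ)
    (X Y : Ω → ℝ)
    (hX : X = fun ω => R ω * Real.cos (Θ ω))
    (hY : Y = fun ω => R ω * Real.sin (Θ ω))
    (ρ : ℝ) (hρ : ρ ∈ Ioc (0 : ℝ) 1)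
    (x : ℝ) (hx : 0 < x) :
    (μ {ω | x < ρ * |X ω| + Real.sqrt (1 - ρ ^ 2) * Y ω}).toReal =
      (μ {ω | x < R ω * Real.cos (Θ ω - Real.arccos ρ) ∧
        Θ ω - Real.arccos ρ ∈ Ioo (-(π / 2)) (π / 2 - Real.arccos ρ)}).toReal +
      (μ {ω | x < -(R ω * Real.cos (Θ ω + Real.arccos ρ)) ∧
        Θ ω ∈ Ioo (π / 2) π ∪ Ioo (-π) (-(π / 2) - Real.arccos ρ)}).toReal := by
  have hs : Real.sqrt (1 - ρ ^ 2) = Real.sin (Real.arccos ρ) := (Real.sin_arccos ρ).symm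
  have hc : Real.cos (Real.arccos ρ) = ρ := Real.cos_arccos (by linarith [hρ.1]) hρ.2
  have h0 : 0 ≤ Real.arccos ρ := Real.arccos_nonneg ρ
  have h1 : Real.arccos ρ < π / 2 := Real.arccos_lt_pi_div_two.2 hρ.1
  rw [hs]
  generalize Real.arccos ρ = ψ at *
  subst hc
  have hpi := Real.pi_pos
  have hmem : ∀ᵐ ω ∂μ, Θ ω ∈ Ioo (-π) π ∧ Θ ω ≠ π / 2 := by
    have : ∀ᵐ t ∂(μ.map Θ), t ∈ Ioo (-π) π ∧ t ≠ π / 2 := by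
      rw [hΘunif]
      apply Measure.ae_smul_measure
      refine (ae_restrict_mem measurableSet_Ioo).and ?_
      exact ae_restrict_of_ae (Measure.ae_ne volume (π / 2))
    exact ae_of_ae_map hΘm.aemeasurable this
  set A : Set Ω := {ω | x < R ω * Real.cos (Θ ω - ψ) ∧
        Θ ω - ψ ∈ Ioo (-(π / 2)) (π / 2 - ψ)} with hA
  set B : Set Ω := {ω | x < -(R ω * Real.cos (Θ ω + ψ)) ∧
        Θ ω ∈ Ioo (π / 2) π ∪ Ioo (-π) (-(π / 2) - ψ)} with hB
  have hBm : MeasurableSet B := by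
    have hm : Measurable fun ω => -(R ω * Real.cos (Θ ω + ψ)) := by fun_prop
    refine (measurableSet_lt measurable_const hm).inter ?_
    exact hΘm (measurableSet_Ioo.union measurableSet_Ioo)
  have hdisj : Disjoint A B := by
    rw [Set.disjoint_left]
    rintro ω ⟨_, ha1, ha2⟩ ⟨_, hb | hb⟩
    · linarith [hb.1]
    · linarith [hb.2]
  rw [← ENNReal.toReal_add (measure_ne_top _ _) (measure_ne_top _ _),
    ← measure_union hdisj hBm]
  congr 1
  apply measure_congr
  filter_upwards [hRpos, hmem] with ω hR hω
  obtain ⟨⟨hl, hu⟩, hne⟩ := hω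
  apply propext
  change x < Real.cos ψ * |X ω| + Real.sin ψ * Y ω ↔ ω ∈ A ∪ B
  simp only [hA, hB, Set.mem_union, Set.mem_ofPred_eq, Set.mem_Ioo, hX, hY]
  rw [abs_mul, abs_of_pos hR]
  have hneg : ∀ t : ℝ, Real.cos t ≤ 0 → ¬ x < R ω * Real.cos t := fun t ht h => by
    nlinarith [mul_nonneg hR.le (neg_nonneg.2 ht)]
  have hpos : ∀ t : ℝ, 0 ≤ Real.cos t → ¬ x < -(R ω * Real.cos t) := fun t ht h => by
    nlinarith [mul_nonneg hR.le ht]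
  by_cases hcase : -(π / 2) ≤ Θ ω ∧ Θ ω < π / 2
  · obtain ⟨g1, g2⟩ := hcase
    rw [abs_of_nonneg (Real.cos_nonneg_of_neg_pi_div_two_le_of_le g1 g2.le)]
    have e : Real.cos ψ * (R ω * Real.cos (Θ ω)) + Real.sin ψ * (R ω * Real.sin (Θ ω))
        = R ω * Real.cos (Θ ω - ψ) := by rw [Real.cos_sub]; ring
    rw [e]
    constructor
    · intro h
      refine Or.inl ⟨h, ?_, by linarith⟩
      by_contra hcon
      push Not at hcon
      apply hneg _ _ h
      rw [← Real.cos_neg]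
      exact Real.cos_nonpos_of_pi_div_two_le_of_le (by linarith) (by linarith)
    · rintro (h | ⟨_, h | h⟩)
      · exact h.1
      · linarith [h.1]
      · linarith [h.2]
  · have hcos : Real.cos (Θ ω) ≤ 0 := by
      by_cases g : Θ ω < π / 2
      · have : Θ ω < -(π / 2) := by
          by_contra g'
          exact hcase ⟨not_lt.1 g', g⟩
        rw [← Real.cos_neg]
        exact Real.cos_nonpos_of_pi_div_two_le_of_le (by linarith) (by linarith)
      · exact Real.cos_nonpos_of_pi_div_two_le_of_le (not_lt.1 g) (by linarith)
    rw [abs_of_nonpos hcos]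
    have e : Real.cos ψ * (R ω * -Real.cos (Θ ω)) + Real.sin ψ * (R ω * Real.sin (Θ ω))
        = -(R ω * Real.cos (Θ ω + ψ)) := by rw [Real.cos_add]; ring
    rw [e]
    constructor
    · intro h
      refine Or.inr ⟨h, ?_⟩
      by_cases g : Θ ω < π / 2
      · have g2 : Θ ω < -(π / 2) := by
          by_contra g'
          exact hcase ⟨not_lt.1 g', g⟩
        refine Or.inr ⟨hl, ?_⟩
        by_contra hcon
        push Not at hcon
        exact hpos _ (Real.cos_nonneg_of_neg_pi_div_two_le_of_le (by linarith) (by linarith)) h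
      · exact Or.inl ⟨lt_of_le_of_ne (not_lt.1 g) (Ne.symm hne), hu⟩
    · rintro (⟨_, h⟩ | h)
      · exact absurd ⟨by linarith [h.1], by linarith [h.2]⟩ hcase
      · exact h.1
end

section
/- For every λ > 0 and every y ∈ ℝ, ∫_0^∞ (1 - Φ((y + x)/(2λ) + λ))·e^{x} dx = e^{-y}·Φ(λ - y/(2λ)) - (1 - Φ(y/(2λ) + λ)), where Φ denotes the standard normal distribution function. -/
open MeasureTheory Filter Real Set Topology

noncomputable def stdNormalCDF (t : ℝ) : ℝ :=
  (Real.sqrt (2 * Real.pi))⁻¹ * ∫ s in Set.Iic t, Real.exp (-(s ^ 2) / 2)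

lemma gauss_int : Integrable (fun s : ℝ => Real.exp (-(s ^ 2) / 2)) := by
  have h := integrable_exp_neg_mul_sq (b := 1 / 2) (by norm_num)
  refine h.congr (Eventually.of_forall fun s => ?_)
  show Real.exp _ = Real.exp _
  congr 1; ring

lemma gauss_total : ∫ s : ℝ, Real.exp (-(s ^ 2) / 2) = Real.sqrt (2 * Real.pi) := by
  have h := integral_gaussian (1 / 2)
  rw [show Real.pi / (1 / 2) = 2 * Real.pi by ring] at h
  rw [← h]
  congr 1; ext s; congr 1; ring

lemma one_sub_Phi (t : ℝ) : 1 - stdNormalCDF t =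
    (Real.sqrt (2 * Real.pi))⁻¹ * ∫ s in Set.Ioi t, Real.exp (-(s ^ 2) / 2) := by
  have h := intervalIntegral.integral_Iic_add_Ioi (b := t) gauss_int.integrableOn
    gauss_int.integrableOn
  rw [gauss_total] at h
  have h0 : Real.sqrt (2 * Real.pi) ≠ 0 := by positivity
  unfold stdNormalCDF
  rw [eq_sub_of_add_eq' h]
  field_simp

lemma Phi_neg (t : ℝ) : stdNormalCDF (-t) = 1 - stdNormalCDF t := by
  rw [one_sub_Phi]
  unfold stdNormalCDF
  rw [← integral_comp_neg_Ioi]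
  simp

lemma one_sub_Phi_nonneg (t : ℝ) : 0 ≤ 1 - stdNormalCDF t := by
  rw [one_sub_Phi]
  have : 0 ≤ ∫ s in Set.Ioi t, Real.exp (-(s ^ 2) / 2) :=
    integral_nonneg fun s => (Real.exp_pos _).le
  positivity

lemma Phi_tendsto : Tendsto stdNormalCDF atTop (𝓝 1) := by
  have h : Tendsto (fun t : ℝ => 1 - (Real.sqrt (2 * Real.pi))⁻¹ *
      ∫ s in Set.Ioi t, Real.exp (-(s ^ 2) / 2)) atTop (𝓝 (1 - (Real.sqrt (2 * Real.pi))⁻¹ * 0)) :=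
    ((tendsto_integral_Ioi_zero tendsto_id).const_mul _).const_sub _
  rw [mul_zero, sub_zero] at h
  refine h.congr fun t => ?_
  rw [← one_sub_Phi]; ring

lemma Phi_deriv (t : ℝ) : HasDerivAt stdNormalCDF
    ((Real.sqrt (2 * Real.pi))⁻¹ * Real.exp (-(t ^ 2) / 2)) t := by
  have hc : Continuous (fun s : ℝ => Real.exp (-(s ^ 2) / 2)) := by fun_prop
  have h := (intervalIntegral.integral_hasDerivAt_right (a := 0) (b := t)
    (hc.intervalIntegrable _ _) (hc.stronglyMeasurableAtFilter _ _) hc.continuousAt)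
  have h2 := (h.add_const (∫ s in Set.Iic (0:ℝ), Real.exp (-(s ^ 2) / 2))).const_mul
    (Real.sqrt (2 * Real.pi))⁻¹
  refine h2.congr_of_eventuallyEq (Eventually.of_forall fun u => ?_)
  show stdNormalCDF u = _
  unfold stdNormalCDF
  beta_reduce
  rw [← intervalIntegral.integral_Iic_sub_Iic gauss_int.integrableOn gauss_int.integrableOn]
  simp

theorem integral_one_sub_Phi_exp_pos (lam y : ℝ) (hlam : 0 < lam) :
    ∫ x in Set.Ioi (0 : ℝ),
        (1 - stdNormalCDF ((y + x) / (2 * lam) + lam)) * Real.exp x =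
      Real.exp (-y) * stdNormalCDF (lam - y / (2 * lam)) -
        (1 - stdNormalCDF (y / (2 * lam) + lam)) := by
  have hu : Tendsto (fun x : ℝ => (y + x) / (2 * lam) + lam) atTop atTop :=
    tendsto_atTop_add_const_right _ _
      ((tendsto_atTop_add_const_left _ _ tendsto_id).atTop_div_const (by positivity))
  have hv : Tendsto (fun x : ℝ => (y + x) / (2 * lam) - lam) atTop atTop :=
    tendsto_atTop_add_const_right _ (-lam)
      ((tendsto_atTop_add_const_left _ _ tendsto_id).atTop_div_const (by positivity))
  have hI : Integrable (fun s : ℝ => Real.exp (-y) * Real.exp (-((s - 2 * lam) ^ 2) / 2)) :=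
    (gauss_int.comp_sub_right (2 * lam)).const_mul _
  have hz : Tendsto (fun x : ℝ => (1 - stdNormalCDF ((y + x) / (2 * lam) + lam)) * Real.exp x)
      atTop (𝓝 0) := by
    have hb := (tendsto_integral_Ioi_zero (μ := volume)
      (f := fun s : ℝ => Real.exp (-y) * Real.exp (-((s - 2 * lam) ^ 2) / 2)) hu).const_mul
        (Real.sqrt (2 * Real.pi))⁻¹
    rw [mul_zero] at hb
    refine squeeze_zero (fun x => mul_nonneg (one_sub_Phi_nonneg _) (Real.exp_pos _).le)
      (fun x => ?_) hb
    rw [one_sub_Phi, mul_assoc, ← integral_mul_const]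
    refine mul_le_mul_of_nonneg_left ?_ (by positivity)
    refine setIntegral_mono_on (gauss_int.mul_const _).integrableOn hI.integrableOn
      measurableSet_Ioi fun s hs => ?_
    rw [← Real.exp_add, ← Real.exp_add]
    apply Real.exp_le_exp.2
    have hs' : (y + x) / (2 * lam) + lam < s := hs
    have h1 : (y + x) / (2 * lam) < s - lam := by linarith
    rw [div_lt_iff₀ (by positivity)] at h1
    nlinarith
  have hG : Tendsto (fun x : ℝ => (1 - stdNormalCDF ((y + x) / (2 * lam) + lam)) * Real.exp x
      + Real.exp (-y) * stdNormalCDF ((y + x) / (2 * lam) - lam)) atTop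
      (𝓝 (0 + Real.exp (-y) * 1)) :=
    hz.add ((Phi_tendsto.comp hv).const_mul _)
  have key := integral_Ioi_of_hasDerivAt_of_nonneg' (a := 0)
    (g' := fun x : ℝ => (1 - stdNormalCDF ((y + x) / (2 * lam) + lam)) * Real.exp x)
    (fun x _ => ?_) (fun x _ => mul_nonneg (one_sub_Phi_nonneg _) (Real.exp_pos _).le) hG
  · rw [key, show lam - y / (2 * lam) = -(y / (2 * lam) - lam) by ring, Phi_neg]
    simp only [add_zero, Real.exp_zero]
    ring
  · have d0 : HasDerivAt (fun x : ℝ => (y + x) / (2 * lam)) (1 / (2 * lam)) x :=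
      ((hasDerivAt_id x).const_add y).div_const _
    have d1 := (Phi_deriv _).comp x (d0.add_const lam)
    have d2 := (Phi_deriv _).comp x (d0.sub_const lam)
    have d3 := ((d1.const_sub 1).mul (Real.hasDerivAt_exp x)).add (d2.const_mul (Real.exp (-y)))
    refine d3.congr_deriv ?_
    have e : Real.exp (-y) * Real.exp (-(((y + x) / (2 * lam) - lam) ^ 2) / 2) =
        Real.exp (-(((y + x) / (2 * lam) + lam) ^ 2) / 2) * Real.exp x := by
      rw [← Real.exp_add, ← Real.exp_add]
      congr 1
      field_simp
      ring
    simp only [Function.comp]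
    linear_combination (Real.sqrt (2 * Real.pi))⁻¹ * (1 / (2 * lam)) * e
end

section
/- Let a, b > 0 and define B̄(x) = ∫_{1-x}^{1} (Γ(a+b)/(Γ(a)·Γ(b)))·s^{a-1}·(1-s)^{b-1} ds for x ∈ (0,1), the upper tail of the Beta(a,b) distribution at 1-x. Then lim_{x↓0} B̄(x)/x^b = Γ(a+b)/(b·Γ(a)·Γ(b)), and moreover lim_{x↓0} ((Γ(a+b)/(b·Γ(a)·Γ(b)))·x^b - B̄(x))/x^{b+1} = (a-1)·Γ(a+b)/((b+1)·Γ(a)·Γ(b)); in particular, for every x > 0, lim_{t↓0} B̄(tx)/B̄(t) = x^b, i.e. the Beta(a,b) distribution is in the Weibull max-domain of attraction with index b. -/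
open MeasureTheory Filter Real Set Topology

lemma aux_lim (g : ℝ → ℝ) (L p : ℝ) (hp : 0 < p) (hg : Measurable g)
    (hL : Tendsto g (𝓝[>] 0) (𝓝 L)) :
    Tendsto (fun x => (∫ u in (0:ℝ)..x, g u * u ^ (p - 1)) / x ^ p) (𝓝[>] 0) (𝓝 (L / p)) := by
  have h1 : ∀ᶠ x in 𝓝[>] (0:ℝ), (∫ v in (0:ℝ)..1, g (x * v) * v ^ (p - 1)) =
      (∫ u in (0:ℝ)..x, g u * u ^ (p - 1)) / x ^ p := by
    filter_upwards [self_mem_nhdsWithin] with x hx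
    have hx : 0 < x := hx
    have h := intervalIntegral.mul_integral_comp_mul_left (a := 0) (b := 1)
      (f := fun u => g u * u ^ (p - 1)) x
    simp only [mul_zero, mul_one] at h
    rw [← h]
    have h2 : (∫ v in (0:ℝ)..1, g (x * v) * (x * v) ^ (p - 1)) =
        ∫ v in (0:ℝ)..1, x ^ (p - 1) * (g (x * v) * v ^ (p - 1)) := by
      apply intervalIntegral.integral_congr
      intro v hv
      rw [uIcc_of_le zero_le_one] at hv
      simp only
      rw [Real.mul_rpow hx.le hv.1]
      ring
    rw [h2, intervalIntegral.integral_const_mul, ← mul_assoc]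
    have h3 : x * x ^ (p - 1) = x ^ p := by
      rw [Real.rpow_sub_one hx.ne']
      field_simp
    rw [h3, mul_div_cancel_left₀ _ (Real.rpow_pos_of_pos hx p).ne']
  refine Tendsto.congr' h1 ?_
  have h4 : L / p = ∫ v in (0:ℝ)..1, L * v ^ (p - 1) := by
    rw [intervalIntegral.integral_const_mul, integral_rpow (Or.inl (by linarith))]
    simp [Real.zero_rpow hp.ne', div_eq_mul_inv]
  rw [h4]
  have hbd : ∀ᶠ u in 𝓝[>] (0:ℝ), |g u| ≤ |L| + 1 := by
    have := hL.abs.eventually (gt_mem_nhds (lt_add_one |L|))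
    filter_upwards [this] with u hu using hu.le
  obtain ⟨δ, hδ, hδ'⟩ := mem_nhdsGT_iff_exists_Ioo_subset.1 hbd
  have hδ : 0 < δ := hδ
  apply intervalIntegral.tendsto_integral_filter_of_dominated_convergence
    (fun v => (|L| + 1) * v ^ (p - 1))
  · filter_upwards with x
    apply Measurable.aestronglyMeasurable
    fun_prop
  · filter_upwards [Ioo_mem_nhdsGT hδ] with x hx
    filter_upwards with v hv
    rw [uIoc_of_le zero_le_one] at hv
    have : |g (x * v)| ≤ |L| + 1 :=
      hδ' ⟨mul_pos hx.1 hv.1, by nlinarith [hx.1, hx.2, hv.1, hv.2]⟩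
    rw [norm_mul, Real.norm_eq_abs, Real.norm_of_nonneg (Real.rpow_nonneg hv.1.le _)]
    exact mul_le_mul_of_nonneg_right this (Real.rpow_nonneg hv.1.le _)
  · exact (intervalIntegral.intervalIntegrable_rpow' (by linarith)).const_mul _
  · filter_upwards with v hv
    rw [uIoc_of_le zero_le_one] at hv
    apply Tendsto.mul_const
    apply hL.comp
    apply tendsto_nhdsWithin_iff.2
    constructor
    · have : Tendsto (fun x : ℝ => x * v) (𝓝 0) (𝓝 (0 * v)) := by
        apply Continuous.tendsto; fun_prop
      rw [zero_mul] at this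
      exact this.mono_left nhdsWithin_le_nhds
    · filter_upwards [self_mem_nhdsWithin] with x hx
      exact mul_pos hx hv.1


theorem beta_weibull_mda (a b : ℝ) (ha : 0 < a) (hb : 0 < b)
    (Bbar : ℝ → ℝ)
    (hB : ∀ x, Bbar x = ∫ s in Set.Ioc (1 - x) 1,
        Real.Gamma (a + b) / (Real.Gamma a * Real.Gamma b) * s ^ (a - 1) * (1 - s) ^ (b - 1)) :
    Tendsto (fun x => Bbar x / x ^ b) (nhdsWithin 0 (Ioi 0))
        (𝓝 (Real.Gamma (a + b) / (b * Real.Gamma a * Real.Gamma b))) ∧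
    Tendsto (fun x =>
        (Real.Gamma (a + b) / (b * Real.Gamma a * Real.Gamma b) * x ^ b - Bbar x) / x ^ (b + 1))
      (nhdsWithin 0 (Ioi 0))
      (𝓝 ((a - 1) * Real.Gamma (a + b) / ((b + 1) * Real.Gamma a * Real.Gamma b))) ∧
    ∀ x > (0 : ℝ),
      Tendsto (fun t => Bbar (t * x) / Bbar t) (nhdsWithin 0 (Ioi 0)) (𝓝 (x ^ b)) := by
  have hGa := Real.Gamma_pos_of_pos ha
  have hGb := Real.Gamma_pos_of_pos hb
  have hGab := Real.Gamma_pos_of_pos (add_pos ha hb)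
  set C := Real.Gamma (a + b) / (Real.Gamma a * Real.Gamma b) with hC
  have hCpos : 0 < C := by positivity
  have e1 : Real.Gamma (a + b) / (b * Real.Gamma a * Real.Gamma b) = C * (1 / b) := by
    rw [hC]; field_simp
  have e2 : (a - 1) * Real.Gamma (a + b) / ((b + 1) * Real.Gamma a * Real.Gamma b)
      = C * ((a - 1) / (b + 1)) := by
    rw [hC]; field_simp
  rw [e1, e2]
  have hB' : ∀ x, 0 < x → Bbar x = C * ∫ u in (0:ℝ)..x, (1 - u) ^ (a - 1) * u ^ (b - 1) := by
    intro x hx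
    rw [hB, ← intervalIntegral.integral_of_le (by linarith)]
    have h := intervalIntegral.integral_comp_sub_left (a := 0) (b := x)
      (fun s : ℝ => C * s ^ (a - 1) * (1 - s) ^ (b - 1)) 1
    rw [sub_zero] at h
    rw [← h, ← intervalIntegral.integral_const_mul]
    congr 1
    ext u
    rw [sub_sub_cancel]
    ring
  have hd : HasDerivAt (fun u : ℝ => (1 - u) ^ (a - 1)) (-(a - 1)) 0 := by
    have h := ((hasDerivAt_id (0:ℝ)).const_sub 1).rpow_const (p := a - 1) (Or.inl (by simp))
    simpa using h
  have t1 : Tendsto (fun x => Bbar x / x ^ b) (𝓝[>] 0) (𝓝 (C * (1 / b))) := by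
    have h := (aux_lim (fun u => (1 - u) ^ (a - 1)) 1 b hb (by fun_prop) (by
      have h := hd.continuousAt.tendsto
      simp only [sub_zero, Real.one_rpow] at h
      exact h.mono_left nhdsWithin_le_nhds)).const_mul C
    refine h.congr' ?_
    filter_upwards [self_mem_nhdsWithin] with x hx
    rw [hB' x hx, mul_div_assoc]
  refine ⟨t1, ?_, ?_⟩
  · have h := (aux_lim (fun u => (1 - (1 - u) ^ (a - 1)) / u) (a - 1) (b + 1) (by linarith)
      (by fun_prop) (by
      have h := (hasDerivAt_iff_tendsto_slope.1 hd).neg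
      rw [neg_neg] at h
      have h' := h.mono_left (nhdsWithin_mono (0:ℝ) (fun x (hx : x ∈ Ioi (0:ℝ)) => ne_of_gt hx))
      refine h'.congr ?_
      intro u
      simp only [slope_def_field, sub_zero, Real.one_rpow]
      ring)).const_mul C
    refine h.congr' ?_
    filter_upwards [Ioo_mem_nhdsGT (zero_lt_one (α := ℝ))] with x hx
    rw [hB' x hx.1, ← mul_div_assoc]
    congr 1
    have i1 : IntervalIntegrable (fun u : ℝ => u ^ (b - 1)) volume 0 x :=
      intervalIntegral.intervalIntegrable_rpow' (by linarith)
    have i2 : IntervalIntegrable (fun u : ℝ => (1 - u) ^ (a - 1) * u ^ (b - 1)) volume 0 x := by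
      apply i1.continuousOn_mul
      intro u hu
      rw [uIcc_of_le hx.1.le] at hu
      apply ContinuousAt.continuousWithinAt
      apply ContinuousAt.rpow_const (by fun_prop)
      left
      have := hu.2
      have := hx.2
      linarith
    have h5 : (1 / b) * x ^ b = ∫ u in (0:ℝ)..x, u ^ (b - 1) := by
      rw [integral_rpow (Or.inl (by linarith))]
      simp [Real.zero_rpow hb.ne']
      ring
    rw [mul_assoc, h5, ← mul_sub, ← intervalIntegral.integral_sub i1 i2]
    congr 1
    apply intervalIntegral.integral_congr_ae
    filter_upwards with u hu
    rw [uIoc_of_le hx.1.le] at hu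
    have hu0 := hu.1
    rw [add_sub_cancel_right, Real.rpow_sub_one hu0.ne']
    field_simp
  · intro x hx
    have hmul : Tendsto (fun t : ℝ => t * x) (𝓝[>] 0) (𝓝[>] 0) := by
      apply tendsto_nhdsWithin_iff.2
      constructor
      · have : Tendsto (fun t : ℝ => t * x) (𝓝 0) (𝓝 (0 * x)) := by
          apply Continuous.tendsto; fun_prop
        rw [zero_mul] at this
        exact this.mono_left nhdsWithin_le_nhds
      · filter_upwards [self_mem_nhdsWithin] with t ht
        exact mul_pos ht hx
    have hne : C * (1 / b) ≠ 0 := by positivity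
    have h := ((t1.comp hmul).div t1 hne).mul_const (x ^ b)
    rw [div_self hne, one_mul] at h
    refine h.congr' ?_
    filter_upwards [self_mem_nhdsWithin] with t ht
    have ht : 0 < t := ht
    simp only [Function.comp, Pi.div_apply]
    rw [Real.mul_rpow ht.le hx.le]
    have := (Real.rpow_pos_of_pos ht b).ne'
    have := (Real.rpow_pos_of_pos hx b).ne'
    by_cases h0 : Bbar t = 0
    · simp [h0]
    · field_simp
end
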